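/- arXiv:1507.02942 — 3 statements merged into one kernel-verified Lean document; each statement's English description precedes it below -/
import Mathlib

section
/- For every prime p ≥ 5 and every positive integer C, there exists a finite p-group G that can be generated by two elements, with |G| > C, such that, writing exp G = p^e, one has |G^{p^{e-1}}| = p and G is a Beauville group. (Hence the 'only if' implication of the criterion 'G is Beauville iff p ≥ 5 and |G^{p^{e-1}}| ≥ p^2' fails for infinitely many 2-generator p-groups.) -/
open Subgroup

/-- `Σ(x,y)`: the union of all conjugates of the cyclic subgroups `⟨x⟩`, `⟨y⟩`, `⟨xy⟩`. -/
def SigmaSet {G : Type*} [Group G] (x y : G) : Set G :=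
  ⋃ g : G, ((zpowers (g * x * g⁻¹) : Set G) ∪ (zpowers (g * y * g⁻¹) : Set G) ∪
    (zpowers (g * (x * y) * g⁻¹) : Set G))

/-- An (unmixed) Beauville structure on `G`. -/
def IsBeauvilleStructure {G : Type*} [Group G] (x₁ y₁ x₂ y₂ : G) : Prop :=
  closure {x₁, y₁} = ⊤ ∧ closure {x₂, y₂} = ⊤ ∧
    SigmaSet x₁ y₁ ∩ SigmaSet x₂ y₂ = {1}

/-- `G` is a Beauville group if it admits a Beauville structure. -/
def IsBeauvilleGroup (G : Type*) [Group G] : Prop :=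
  ∃ x₁ y₁ x₂ y₂ : G, IsBeauvilleStructure x₁ y₁ x₂ y₂

/-- `G^n`: the subgroup generated by all `n`-th powers of elements of `G`. -/
def powSubgroup (G : Type*) [Group G] (n : ℕ) : Subgroup G :=
  closure (Set.range fun g : G => g ^ n)


theorem bv_ring_exists_aux {p : ℕ} (hp : p.Prime) (hp2 : p ≠ 2) (f : ℕ) (K : Type) [Field K]
    [NumberField K] [IsCyclotomicExtension {p} ℚ K] :
    ∃ (R : Type) (_ : CommRing R), Finite R ∧ (∃ m, f < m ∧ Nat.card R = p ^ m) ∧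
      ∃ (ε : R →+* ZMod p) (z : R), (∀ r, (p : R) ^ f * r = 0 ↔ ε r = 0) ∧
        z ^ p = 1 ∧ ∑ i ∈ Finset.range p, z ^ i = 0 ∧
        ∀ S : AddSubgroup R, 1 ∈ S → (∀ s ∈ S, z * s ∈ S) → S = ⊤ := by
  have : Fact p.Prime := ⟨hp⟩
  let O := NumberField.RingOfIntegers K
  have hζ : IsPrimitiveRoot (IsCyclotomicExtension.zeta p ℚ K) p :=
    IsCyclotomicExtension.zeta_spec p ℚ K
  let ζ : O := hζ.toInteger
  have hζ' : IsPrimitiveRoot ζ p := hζ.toInteger_isPrimitiveRoot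
  let l : O := ζ - 1
  have hl : Prime l := hζ.zeta_sub_one_prime'
  have hnorm : Ideal.absNorm (Ideal.span {l}) = p := by
    rw [Ideal.absNorm_span_singleton, hζ.norm_toInteger_sub_one_of_prime_ne_two' hp2]; simp
  let d := p - 1
  have hdpos : 0 < d := by have := hp.two_le; omega
  have hassoc : Associated (p : O) (l ^ d) :=
    (IsCyclotomicExtension.Rat.associated_zeta_sub_one_pow_prime p hζ).symm
  let n := d * f + 1
  let I : Ideal O := Ideal.span {l ^ n}
  have hIle : I ≤ Ideal.span {l} := by
    rw [Ideal.span_singleton_le_span_singleton]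
    exact dvd_pow_self _ (by omega)
  have hcard : Nat.card (O ⧸ I) = p ^ n := by
    rw [← Submodule.cardQuot_apply, ← Ideal.absNorm_apply, show I = Ideal.span {l ^ n} from rfl,
      ← Ideal.span_singleton_pow, map_pow, hnorm]
  have hcardl : Nat.card (O ⧸ Ideal.span {l}) = p := by
    rw [← Submodule.cardQuot_apply, ← Ideal.absNorm_apply, hnorm]
  have : Finite (O ⧸ Ideal.span {l}) := Nat.finite_of_card_ne_zero (by rw [hcardl]; exact hp.ne_zero)
  have := Fintype.ofFinite (O ⧸ Ideal.span {l})
  let E := ZMod.ringEquivOfPrime (O ⧸ Ideal.span {l}) hp (by rw [← Nat.card_eq_fintype_card, hcardl])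
  have hfin : Finite (O ⧸ I) := 
    Nat.finite_of_card_ne_zero (by rw [hcard]; exact pow_ne_zero _ hp.ne_zero)
  refine ⟨O ⧸ I, inferInstance, hfin, ⟨n, ?_, hcard⟩, 
    E.symm.toRingHom.comp (Ideal.Quotient.factor hIle), Ideal.Quotient.mk I ζ, ?_, ?_, ?_, ?_⟩
  · have := Nat.le_mul_of_pos_left f hdpos
    omega
  · intro r
    obtain ⟨r, rfl⟩ := Ideal.Quotient.mk_surjective r
    have h1 : ((p : O ⧸ I) ^ f * Ideal.Quotient.mk I r) = Ideal.Quotient.mk I ((p : O) ^ f * r) := by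
      rw [map_mul, map_pow]; rfl
    rw [h1, Ideal.Quotient.eq_zero_iff_mem, Ideal.mem_span_singleton]
    have h2 : (l ^ n ∣ (p : O) ^ f * r) ↔ l ∣ r := by
      have h3 : Associated ((p : O) ^ f * r) (l ^ (d * f) * r) := by
        rw [pow_mul]; exact (hassoc.pow_pow).mul_right r
      rw [h3.dvd_iff_dvd_right, show n = d * f + 1 from rfl, pow_succ]
      exact mul_dvd_mul_iff_left (pow_ne_zero _ hl.ne_zero)
    rw [h2]
    simp only [RingEquiv.toRingHom_eq_coe, RingHom.comp_apply, RingHom.coe_coe]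
    rw [map_eq_zero_iff _ E.symm.injective, Ideal.Quotient.factor_mk,
      Ideal.Quotient.eq_zero_iff_mem, Ideal.mem_span_singleton]
  · rw [← map_pow, hζ'.pow_eq_one, map_one]
  · rw [← map_zero (Ideal.Quotient.mk I), ← hζ'.geom_sum_eq_zero hp.one_lt, map_sum]
    simp
  · intro S h1 hS
    have htop : Algebra.adjoin ℤ ({ζ} : Set O) = ⊤ := by
      have := hζ.integralPowerBasis.adjoin_gen_eq_top
      rwa [hζ.integralPowerBasis_gen] at this
    rw [eq_top_iff]
    rintro r -
    obtain ⟨r, rfl⟩ := Ideal.Quotient.mk_surjective r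
    have hr : r ∈ Algebra.adjoin ℤ ({ζ} : Set O) := by rw [htop]; trivial
    rw [Algebra.adjoin_singleton_eq_range_aeval] at hr
    obtain ⟨q, rfl⟩ := hr
    have hpow : ∀ k : ℕ, Ideal.Quotient.mk I ζ ^ k ∈ S := by
      intro k
      induction k with
      | zero => simpa using h1
      | succ k ih => rw [pow_succ']; exact hS _ ih
    change Ideal.Quotient.mk I (Polynomial.aeval ζ q) ∈ S
    rw [Polynomial.aeval_eq_sum_range, map_sum]
    refine sum_mem fun i _ => ?_
    rw [map_zsmul, map_pow]
    exact zsmul_mem (hpow i) _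

theorem bv_ring_exists {p : ℕ} (hp : p.Prime) (hp2 : p ≠ 2) (f : ℕ) :
    ∃ (R : Type) (_ : CommRing R), Finite R ∧ (∃ m, f < m ∧ Nat.card R = p ^ m) ∧
      ∃ (ε : R →+* ZMod p) (z : R), (∀ r, (p : R) ^ f * r = 0 ↔ ε r = 0) ∧
        z ^ p = 1 ∧ ∑ i ∈ Finset.range p, z ^ i = 0 ∧
        ∀ S : AddSubgroup R, 1 ∈ S → (∀ s ∈ S, z * s ∈ S) → S = ⊤ := by
  have : NeZero p := ⟨hp.ne_zero⟩
  have : IsCyclotomicExtension {p} ℚ (CyclotomicField p ℚ) :=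
    CyclotomicField.isCyclotomicExtension p ℚ
  exact bv_ring_exists_aux hp hp2 f (CyclotomicField p ℚ)

/-- The semidirect product of the additive group of `R` with `ZMod p`, acting through `χ`. -/
@[ext] structure BV {p : ℕ} {R : Type} [CommRing R] (χ : Multiplicative (ZMod p) →* R) where
  a : R
  i : ZMod p

namespace BV

open Multiplicative

variable {p : ℕ} {R : Type} [CommRing R] {χ : Multiplicative (ZMod p) →* R}

instance : Mul (BV χ) := ⟨fun x y => ⟨x.a + χ (ofAdd x.i) * y.a, x.i + y.i⟩⟩
instance : One (BV χ) := ⟨⟨0, 0⟩⟩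
instance : Inv (BV χ) := ⟨fun x => ⟨-(χ (ofAdd (-x.i)) * x.a), -x.i⟩⟩

@[simp] theorem mul_a (x y : BV χ) : (x * y).a = x.a + χ (ofAdd x.i) * y.a := rfl
@[simp] theorem mul_i (x y : BV χ) : (x * y).i = x.i + y.i := rfl
@[simp] theorem one_a : (1 : BV χ).a = 0 := rfl
@[simp] theorem one_i : (1 : BV χ).i = 0 := rfl
@[simp] theorem inv_a (x : BV χ) : (x⁻¹).a = -(χ (ofAdd (-x.i)) * x.a) := rfl
@[simp] theorem inv_i (x : BV χ) : (x⁻¹).i = -x.i := rfl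

theorem chi_add (i j : ZMod p) : χ (ofAdd (i + j)) = χ (ofAdd i) * χ (ofAdd j) := by
  rw [ofAdd_add, map_mul]

theorem chi_zero : χ (ofAdd (0 : ZMod p)) = 1 := by
  rw [ofAdd_zero, map_one]

theorem chi_neg (i : ZMod p) : χ (ofAdd (-i)) * χ (ofAdd i) = 1 := by
  rw [← chi_add, neg_add_cancel, chi_zero]

theorem chi_neg' (i : ZMod p) : χ (ofAdd i) * χ (ofAdd (-i)) = 1 := by
  rw [← chi_add, add_neg_cancel, chi_zero]

instance : Group (BV χ) :=
  Group.ofLeftAxioms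
    (fun x y z => by
      ext
      · simp only [mul_a, mul_i, chi_add]; ring
      · simp only [mul_i, add_assoc])
    (fun x => by
      ext
      · simp only [mul_a, one_a, one_i, chi_zero]; ring
      · simp only [mul_i, one_i, zero_add])
    (fun x => by
      ext
      · simp only [mul_a, one_a, inv_a, inv_i]; ring
      · simp only [mul_i, inv_i, one_i, neg_add_cancel])

def equivProd : BV χ ≃ R × ZMod p where
  toFun x := (x.a, x.i)
  invFun x := ⟨x.1, x.2⟩
  left_inv _ := rfl
  right_inv _ := rfl

theorem card_eq : Nat.card (BV χ) = Nat.card R * p := by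
  rw [Nat.card_congr equivProd, Nat.card_prod, Nat.card_zmod]

/-- The inclusion of the base group. -/
def inl : Multiplicative R →* BV χ where
  toFun r := ⟨toAdd r, 0⟩
  map_one' := rfl
  map_mul' x y := by ext <;> simp [chi_zero]

theorem inl_injective : Function.Injective (inl : Multiplicative R →* BV χ) := by
  intro x y h
  exact congrArg BV.a h

theorem pow_i (x : BV χ) (k : ℕ) : (x ^ k).i = (k : ZMod p) * x.i := by
  induction k with
  | zero => simp
  | succ k ih => rw [pow_succ, mul_i, ih]; push_cast; ring

theorem pow_a (x : BV χ) (k : ℕ) :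
    (x ^ k).a = x.a * ∑ m ∈ Finset.range k, χ (ofAdd ((m : ZMod p) * x.i)) := by
  induction k with
  | zero => simp
  | succ k ih => rw [pow_succ, mul_a, ih, Finset.sum_range_succ, pow_i]; ring

theorem pow_base (r : R) (k : ℕ) : (⟨r, 0⟩ : BV χ) ^ k = ⟨(k : R) * r, 0⟩ := by
  ext
  · rw [pow_a]; simp [chi_zero, mul_comm]
  · rw [pow_i]; simp

/-- The map to the Frattini quotient. -/
def frat (ε : R →+* ZMod p) (hε : ∀ i, ε (χ (ofAdd i)) = 1) :
    BV χ →* Multiplicative (ZMod p × ZMod p) where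
  toFun x := ofAdd (ε x.a, x.i)
  map_one' := by simp
  map_mul' x y := by
    rw [← ofAdd_add]; simp [hε]

theorem sum_chi [Fact p.Prime] {i : ZMod p} (hi : i ≠ 0) :
    ∑ m ∈ Finset.range p, χ (ofAdd ((m : ZMod p) * i)) = ∑ j : ZMod p, χ (ofAdd j) := by
  refine Finset.sum_nbij (fun m => (m : ZMod p) * i) (fun _ _ => Finset.mem_univ _) ?_ ?_
    (fun _ _ => rfl)
  · intro m hm n hn h
    have h' : (m : ZMod p) = n := mul_right_cancel₀ hi h
    rw [ZMod.natCast_eq_natCast_iff'] at h'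
    simp only [Finset.coe_range, Set.mem_Iio] at hm hn
    rwa [Nat.mod_eq_of_lt hm, Nat.mod_eq_of_lt hn] at h'
  · intro j _
    refine ⟨(j / i).val, by simpa using ZMod.val_lt _, ?_⟩
    simp only [ZMod.natCast_zmod_val]
    field_simp

theorem pow_p [Fact p.Prime] (hsum : ∑ j : ZMod p, χ (ofAdd j) = 0) (x : BV χ) (hx : x.i ≠ 0) :
    x ^ p = 1 := by
  ext
  · rw [pow_a, sum_chi hx, hsum]; simp
  · rw [pow_i]; simp

/-- Disjointness of conjugates of cyclic subgroups. -/
theorem disj [Fact p.Prime] (ε : R →+* ZMod p) (hε : ∀ i, ε (χ (ofAdd i)) = 1)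
    (hsum : ∑ j : ZMod p, χ (ofAdd j) = 0) (x y : BV χ) (hx : x.i ≠ 0)
    (hdet : ε x.a * y.i - ε y.a * x.i ≠ 0) (g h w : BV χ)
    (hw : w ∈ Subgroup.zpowers (g * x * g⁻¹)) (hw' : w ∈ Subgroup.zpowers (h * y * h⁻¹)) :
    w = 1 := by
  obtain ⟨k, rfl⟩ := Subgroup.mem_zpowers_iff.mp hw
  obtain ⟨l, hl⟩ := Subgroup.mem_zpowers_iff.mp hw'
  have h1 := congrArg (frat ε hε) hl
  simp only [map_zpow, map_mul, map_inv, mul_inv_cancel_comm] at h1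
  have h2 : l • ((ε y.a, y.i) : ZMod p × ZMod p) = k • (ε x.a, x.i) := h1
  simp only [Prod.smul_mk, Prod.mk.injEq, zsmul_eq_mul] at h2
  obtain ⟨e1, e2⟩ := h2
  have h3 : (k : ZMod p) * (ε x.a * y.i - ε y.a * x.i) = 0 := by
    linear_combination -y.i * e1 + ε y.a * e2
  have h4 : (k : ZMod p) = 0 := (mul_eq_zero.mp h3).resolve_right hdet
  rw [ZMod.intCast_zmod_eq_zero_iff_dvd] at h4
  obtain ⟨q, rfl⟩ := h4
  rw [conj_zpow, zpow_mul, zpow_natCast, pow_p hsum x hx]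
  simp

/-- A subgroup containing `(c, 0)` with `c` a unit, and `(t, 1)`, is everything. -/
theorem gen [Fact p.Prime]
    (hS : ∀ S : AddSubgroup R, 1 ∈ S → (∀ s ∈ S, χ (ofAdd 1) * s ∈ S) → S = ⊤)
    (H : Subgroup (BV χ)) (c t : R) (hc : IsUnit c) (h1 : ⟨c, 0⟩ ∈ H) (h2 : ⟨t, 1⟩ ∈ H) :
    H = ⊤ := by
  let S : AddSubgroup R :=
    { carrier := {r | (⟨c * r, 0⟩ : BV χ) ∈ H}
      zero_mem' := by
        have := H.one_mem
        simp only [Set.mem_ofPred_eq, mul_zero]; exact this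
      add_mem' := by
        intro r s hr hs
        have := H.mul_mem hr hs
        simp only [Set.mem_ofPred_eq]
        convert this using 1
        ext <;> simp [chi_zero, mul_add]
      neg_mem' := by
        intro r hr
        have := H.inv_mem hr
        simp only [Set.mem_ofPred_eq]
        convert this using 1
        ext <;> simp [chi_zero] }
  have hST : S = ⊤ := by
    refine hS S ?_ ?_
    · change (⟨c * 1, 0⟩ : BV χ) ∈ H
      rwa [mul_one]
    · intro s hs
      have := H.mul_mem (H.mul_mem h2 hs) (H.inv_mem h2)
      change (⟨c * (χ (ofAdd 1) * s), 0⟩ : BV χ) ∈ H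
      convert this using 1
      ext
      · simp only [mul_a, mul_i, inv_a, add_zero]
        linear_combination t * chi_neg' (χ := χ) 1
      · simp
  have hbase : ∀ r : R, (⟨r, 0⟩ : BV χ) ∈ H := by
    intro r
    obtain ⟨u, rfl⟩ := hc
    have : (↑u⁻¹ * r) ∈ S := by rw [hST]; trivial
    have h : (⟨u * (↑u⁻¹ * r), 0⟩ : BV χ) ∈ H := this
    rwa [Units.mul_inv_cancel_left] at h
  rw [eq_top_iff]
  rintro x -
  have h3 := H.mul_mem (hbase (x.a - ((⟨t, 1⟩ : BV χ) ^ x.i.val).a)) (H.pow_mem h2 x.i.val)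
  convert h3 using 1
  ext
  · simp [chi_zero]
  · simp [pow_i]

end BV

/-- The character of `ZMod p` determined by an element with `z ^ p = 1`. -/
def bvChi {p : ℕ} [NeZero p] {R : Type} [CommRing R] (z : R) (hz : z ^ p = 1) :
    Multiplicative (ZMod p) →* R where
  toFun i := z ^ (Multiplicative.toAdd i).val
  map_one' := by simp
  map_mul' i j := by
    rw [toAdd_mul, ZMod.val_add, ← pow_add]
    conv_rhs => rw [← Nat.mod_add_div ((Multiplicative.toAdd i).val + (Multiplicative.toAdd j).val) p]
    rw [pow_add, pow_mul, hz, one_pow, mul_one]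

theorem mem_SigmaSet {G : Type*} [Group G] {x y w : G} (h : w ∈ SigmaSet x y) :
    ∃ g : G, ∃ t : G, (t = x ∨ t = y ∨ t = x * y) ∧ w ∈ zpowers (g * t * g⁻¹) := by
  obtain ⟨g, hg⟩ := Set.mem_iUnion.mp h
  rcases hg with (hg | hg) | hg
  · exact ⟨g, x, Or.inl rfl, hg⟩
  · exact ⟨g, y, Or.inr (Or.inl rfl), hg⟩
  · exact ⟨g, x * y, Or.inr (Or.inr rfl), hg⟩

theorem one_mem_SigmaSet {G : Type*} [Group G] (x y : G) : (1 : G) ∈ SigmaSet x y :=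
  Set.mem_iUnion.mpr ⟨1, Or.inl (Or.inl (one_mem _))⟩

theorem exists_large_beauville_group_with_small_power_subgroup
    {p : ℕ} (hp : p.Prime) (hp5 : 5 ≤ p) (C : ℕ) (hC : 0 < C) :
    ∃ (G : Type) (_ : Group G), Finite G ∧ IsPGroup p G ∧
      (∃ a b : G, closure ({a, b} : Set G) = ⊤) ∧
      C < Nat.card G ∧
      ∃ e : ℕ, Monoid.exponent G = p ^ e ∧
        Nat.card (powSubgroup G (p ^ (e - 1))) = p ∧
        IsBeauvilleGroup G := by
  have hfact : Fact p.Prime := ⟨hp⟩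
  obtain ⟨R, _, hRfin, ⟨m, hm, hcard⟩, ε, z, hker, hzp, hzsum, hS⟩ :=
    bv_ring_exists hp (by omega) C
  let χ := bvChi z hzp
  have hχ : ∀ i, χ (Multiplicative.ofAdd i) = z ^ i.val := fun i => rfl
  have hχ1 : χ (Multiplicative.ofAdd 1) = z := by
    have : Fact (1 < p) := ⟨hp.one_lt⟩
    rw [hχ, ZMod.val_one, pow_one]
  have hεz : ε z = 1 := by
    have := congrArg ε hzp
    rwa [map_pow, ZMod.pow_card, map_one] at this
  have hε : ∀ i, ε (χ (Multiplicative.ofAdd i)) = 1 := by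
    intro i
    rw [hχ, map_pow, hεz, one_pow]
  have hsum : ∑ j : ZMod p, χ (Multiplicative.ofAdd j) = 0 := by
    rw [← BV.sum_chi (one_ne_zero), ← hzsum]
    refine Finset.sum_congr rfl fun i hi => ?_
    rw [mul_one, hχ, ZMod.val_natCast_of_lt (Finset.mem_range.mp hi)]
  have hS' : ∀ S : AddSubgroup R, 1 ∈ S → (∀ s ∈ S, χ (Multiplicative.ofAdd 1) * s ∈ S) →
      S = ⊤ := by
    rw [hχ1]; exact hS
  have hcardG : Nat.card (BV χ) = p ^ (m + 1) := by
    rw [BV.card_eq, hcard, pow_succ]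
  have hpR : (p : R) ^ (C + 1) = 0 := by
    rw [pow_succ, hker]; simp
  have hpR' : (p : R) ^ C ≠ 0 := by
    intro h
    have := (hker 1).mp (by rw [h, zero_mul])
    simp at this
  have n2 : (2 : ZMod p) ≠ 0 := by
    intro h
    have : ((2 : ℕ) : ZMod p) = 0 := by exact_mod_cast h
    rw [ZMod.natCast_eq_zero_iff] at this
    have := Nat.le_of_dvd (by norm_num) this
    omega
  have n3' : ¬ p ∣ 3 := by
    intro h
    have := Nat.le_of_dvd (by norm_num) h
    omega
  have n3 : (3 : ZMod p) ≠ 0 := by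
    intro h
    have : ((3 : ℕ) : ZMod p) = 0 := by exact_mod_cast h
    rw [ZMod.natCast_eq_zero_iff] at this
    exact n3' this
  have hunit : IsUnit (-3 : R) := by
    have hco : Nat.Coprime 3 (p ^ (C + 1)) :=
      (Nat.Coprime.pow_left _ ((Nat.Prime.coprime_iff_not_dvd hp).mpr n3')).symm
    have h1 := Nat.isCoprime_iff_coprime.mpr hco
    have h2 := h1.map (Int.castRingHom R)
    simp only [eq_intCast, Int.cast_natCast, Nat.cast_pow, Int.cast_pow] at h2
    rw [hpR, isCoprime_zero_right] at h2
    simpa using h2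
  -- the two triples
  let x₁ : BV χ := ⟨0, 1⟩
  let y₁ : BV χ := ⟨1, 1⟩
  let x₂ : BV χ := ⟨-3, 0⟩
  let y₂ : BV χ := ⟨2, 1⟩
  have hgen1 : closure ({x₁, y₁} : Set (BV χ)) = ⊤ := by
    have hx : x₁ ∈ closure ({x₁, y₁} : Set (BV χ)) := subset_closure (by simp)
    have hy : y₁ ∈ closure ({x₁, y₁} : Set (BV χ)) := subset_closure (by simp)
    refine BV.gen hS' _ 1 0 isUnit_one ?_ hx
    have := mul_mem hy (inv_mem hx)
    convert this using 1
    ext <;> simp [x₁, y₁]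
  have hgen2 : closure ({x₂, y₂} : Set (BV χ)) = ⊤ :=
    BV.gen hS' _ (-3) 2 hunit (subset_closure (by simp [x₂])) (subset_closure (by simp [y₂]))
  have hbase : ∀ x : BV χ, x.i = 0 → x = ⟨x.a, 0⟩ := by
    intro x hx
    ext
    · rfl
    · exact hx
  refine ⟨BV χ, inferInstance, Nat.finite_of_card_ne_zero ?_, IsPGroup.of_card hcardG,
    ⟨x₁, y₁, hgen1⟩, ?_, C + 1, ?_, ?_, x₁, y₁, x₂, y₂, hgen1, hgen2, ?_⟩
  · rw [hcardG]; exact pow_ne_zero _ hp.ne_zero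
  · rw [hcardG]
    have := Nat.lt_pow_self hp.one_lt (n := m + 1)
    omega
  · refine (Nat.eq_prime_pow_of_dvd_least_prime_pow hp ?_ ?_)
    · intro h
      have h1 := Monoid.exponent_dvd_iff_forall_pow_eq_one.mp h (⟨1, 0⟩ : BV χ)
      rw [BV.pow_base] at h1
      have h2 := congrArg BV.a h1
      simp only [mul_one, BV.one_a, Nat.cast_pow] at h2
      exact hpR' h2
    · rw [Monoid.exponent_dvd_iff_forall_pow_eq_one]
      intro x
      by_cases hx : x.i = 0
      · rw [hbase x hx, BV.pow_base, Nat.cast_pow, hpR, zero_mul]; rfl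
      · rw [pow_succ', pow_mul, BV.pow_p hsum x hx, one_pow]
  · rw [Nat.add_sub_cancel]
    let θ : Multiplicative R →* BV χ :=
      BV.inl.comp (AddMonoidHom.toMultiplicative (AddMonoidHom.mulLeft ((p : R) ^ C)))
    have hθ : ∀ r, θ r = ⟨(p : R) ^ C * r.toAdd, 0⟩ := fun r => rfl
    let η : Multiplicative R →* Multiplicative (ZMod p) :=
      AddMonoidHom.toMultiplicative ε.toAddMonoidHom
    have hη : ∀ r, η r = Multiplicative.ofAdd (ε r.toAdd) := fun r => rfl
    have h1 : powSubgroup (BV χ) (p ^ C) = θ.range := by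
      apply le_antisymm
      · refine (closure_le _).mpr ?_
        rintro _ ⟨x, rfl⟩
        by_cases hx : x.i = 0
        · refine ⟨Multiplicative.ofAdd x.a, ?_⟩
          simp only []
          rw [hθ, hbase x hx, BV.pow_base, Nat.cast_pow]; rfl
        · obtain ⟨k, rfl⟩ := Nat.exists_eq_succ_of_ne_zero hC.ne'
          simp only []
          rw [Nat.succ_eq_add_one, pow_succ', pow_mul, BV.pow_p hsum x hx, one_pow]
          exact one_mem _
      · rintro _ ⟨r, rfl⟩
        refine subset_closure ⟨⟨r.toAdd, 0⟩, ?_⟩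
        simp only []
        rw [BV.pow_base, hθ, Nat.cast_pow]
    have h2 : θ.ker = η.ker := by
      ext r
      rw [MonoidHom.mem_ker, MonoidHom.mem_ker, hθ, hη, ofAdd_eq_one, ← hker]
      constructor
      · intro h; exact congrArg BV.a h
      · intro h; rw [h]; rfl
    have h3 : Function.Surjective η := ZMod.ringHom_surjective ε
    rw [h1, ← Subgroup.index_ker, h2, Subgroup.index_ker, MonoidHom.range_eq_top.mpr h3,
      Subgroup.card_top]
    exact Nat.card_zmod p
  · apply Set.eq_singleton_iff_unique_mem.mpr
    refine ⟨⟨one_mem_SigmaSet _ _, one_mem_SigmaSet _ _⟩, ?_⟩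
    rintro w ⟨hw1, hw2⟩
    obtain ⟨g, s, hs, hgs⟩ := mem_SigmaSet hw1
    obtain ⟨h, t, ht, hht⟩ := mem_SigmaSet hw2
    have hsi : s.i ≠ 0 := by
      rcases hs with rfl | rfl | rfl
      · exact one_ne_zero
      · exact one_ne_zero
      · simpa [x₁, y₁, one_add_one_eq_two] using n2
    refine BV.disj ε hε hsum s t hsi ?_ g h w hgs hht
    have hs' : (ε s.a = 0 ∧ s.i = 1) ∨ (ε s.a = 1 ∧ s.i = 1) ∨ (ε s.a = 1 ∧ s.i = 2) := by
      rcases hs with rfl | rfl | rfl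
      · left; simp [x₁]
      · right; left; simp [y₁]
      · right; right; simp [x₁, y₁, hε, one_add_one_eq_two]
    have ht' : (ε t.a = -3 ∧ t.i = 0) ∨ (ε t.a = 2 ∧ t.i = 1) ∨ (ε t.a = -1 ∧ t.i = 1) := by
      rcases ht with rfl | rfl | rfl
      · left; exact ⟨by rw [show x₂.a = -3 from rfl, map_neg, map_ofNat], rfl⟩
      · right; left; exact ⟨by rw [show y₂.a = 2 from rfl, map_ofNat], rfl⟩
      · right; right
        simp only [x₂, y₂, BV.mul_a, BV.mul_i, map_add, map_mul, hε, map_neg, map_ofNat]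
        constructor <;> ring
    have n1 : (1 : ZMod p) ≠ 0 := one_ne_zero
    rcases hs' with ⟨a1, a2⟩ | ⟨a1, a2⟩ | ⟨a1, a2⟩ <;>
      rcases ht' with ⟨b1, b2⟩ | ⟨b1, b2⟩ | ⟨b1, b2⟩ <;> rw [a1, a2, b1, b2] <;> intro h0
    · exact n3 (by linear_combination h0)
    · exact n2 (by linear_combination -h0)
    · exact n1 (by linear_combination h0)
    · exact n3 (by linear_combination h0)
    · exact n1 (by linear_combination -h0)
    · exact n2 (by linear_combination h0)
    · exact mul_ne_zero n2 n3 (by linear_combination h0)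
    · exact n3 (by linear_combination -h0)
    · exact n3 (by linear_combination h0)
end

section
/- For every prime p ≥ 5 and every positive integer m, there exists a finite p-group G that can be generated by two elements such that, writing exp G = p^e, one has |G^{p^{e-1}}| = p^m, and G is not a Beauville group. -/
open Subgroup

/-- The semidirect product of the additive group of `R` by `ℤ/q` acting via powers of `T`. -/
structure AffG (R : Type) (q : ℕ) [CommRing R] (T : R) (hT : T ^ q = 1) where
  a : R
  i : ZMod q

namespace AffG

variable {R : Type} {q : ℕ} [CommRing R] {T : R} {hT : T ^ q = 1}

theorem pow_val_add [NeZero q] (T : R) (hT : T ^ q = 1) (i j : ZMod q) :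
    T ^ (i + j).val = T ^ i.val * T ^ j.val := by
  rw [ZMod.val_add, ← pow_eq_pow_mod _ hT, pow_add]

theorem ext' {x y : AffG R q T hT} (h1 : x.a = y.a) (h2 : x.i = y.i) : x = y := by
  cases x; cases y; simp_all

instance : Mul (AffG R q T hT) := ⟨fun x y => ⟨x.a + T ^ x.i.val * y.a, x.i + y.i⟩⟩
instance : One (AffG R q T hT) := ⟨⟨0, 0⟩⟩
instance : Inv (AffG R q T hT) := ⟨fun x => ⟨-(T ^ (-x.i).val * x.a), -x.i⟩⟩

theorem mul_a (x y : AffG R q T hT) : (x * y).a = x.a + T ^ x.i.val * y.a := rfl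
theorem mul_i (x y : AffG R q T hT) : (x * y).i = x.i + y.i := rfl
theorem one_a : (1 : AffG R q T hT).a = 0 := rfl
theorem one_i : (1 : AffG R q T hT).i = 0 := rfl
theorem inv_a (x : AffG R q T hT) : (x⁻¹).a = -(T ^ (-x.i).val * x.a) := rfl
theorem inv_i (x : AffG R q T hT) : (x⁻¹).i = -x.i := rfl

instance [NeZero q] : Group (AffG R q T hT) :=
  Group.ofLeftAxioms
    (fun x y z => by
      apply ext'
      · simp only [mul_a, mul_i, pow_val_add T hT]; ring
      · simp only [mul_i, add_assoc])
    (fun x => by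
      apply ext'
      · simp [mul_a, one_a, one_i]
      · simp [mul_i, one_i])
    (fun x => by
      apply ext'
      · simp [mul_a, one_a, inv_a, inv_i]
      · simp [mul_i, one_i, inv_i])

variable [NeZero q]

theorem pow_eq (x : AffG R q T hT) (k : ℕ) :
    x ^ k = ⟨(∑ j ∈ Finset.range k, (T ^ x.i.val) ^ j) * x.a, k * x.i⟩ := by
  induction k with
  | zero => apply ext' <;> simp [one_a, one_i]
  | succ k ih =>
    rw [pow_succ', ih]
    apply ext'
    · simp only [mul_a]
      rw [Finset.sum_range_succ', add_mul, ← mul_assoc, Finset.mul_sum]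
      simp only [pow_succ', pow_zero, one_mul]
      rw [add_comm]
    · simp only [mul_i]; push_cast; ring

/-- the projection to `ZMod q`. -/
def projI : AffG R q T hT →* Multiplicative (ZMod q) where
  toFun x := Multiplicative.ofAdd x.i
  map_one' := rfl
  map_mul' _ _ := rfl

/-- the projection through an augmentation. -/
def projE {p : ℕ} (ε : R →+* ZMod p) (hε : ε T = 1) :
    AffG R q T hT →* Multiplicative (ZMod p) where
  toFun x := Multiplicative.ofAdd (ε x.a)
  map_one' := by simp [one_a]
  map_mul' x y := by simp [mul_a, hε]

theorem gen (hc : Function.Surjective (Polynomial.aeval (R := ℤ) T)) :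
    closure ({⟨1, 0⟩, ⟨0, 1⟩} : Set (AffG R q T hT)) = ⊤ := by
  set K := closure ({⟨1, 0⟩, ⟨0, 1⟩} : Set (AffG R q T hT)) with hK
  have h1 : (⟨1, 0⟩ : AffG R q T hT) ∈ K := subset_closure (by simp)
  have h2 : (⟨0, 1⟩ : AffG R q T hT) ∈ K := subset_closure (by simp)
  have h3 : ∀ i : ZMod q, (⟨0, i⟩ : AffG R q T hT) ∈ K := by
    intro i
    have := K.pow_mem h2 i.val
    rw [pow_eq] at this
    simpa using this
  have h4 : ∀ (i : ZMod q) (a : R), (⟨a, 0⟩ : AffG R q T hT) ∈ K →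
      (⟨T ^ i.val * a, 0⟩ : AffG R q T hT) ∈ K := by
    intro i a ha
    have := K.mul_mem (K.mul_mem (h3 i) ha) (h3 (-i))
    convert this using 1
    apply ext' <;> simp [mul_a, mul_i]
  have h4' : ∀ (k : ℕ) (a : R), (⟨a, 0⟩ : AffG R q T hT) ∈ K →
      (⟨T ^ k * a, 0⟩ : AffG R q T hT) ∈ K := by
    intro k a ha
    have := h4 (k : ZMod q) a ha
    rwa [ZMod.val_natCast, ← pow_eq_pow_mod _ hT] at this
  have hadd : ∀ a b : R, (⟨a, 0⟩ : AffG R q T hT) ∈ K → (⟨b, 0⟩ : AffG R q T hT) ∈ K →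
      (⟨a + b, 0⟩ : AffG R q T hT) ∈ K := by
    intro a b ha hb
    have := K.mul_mem ha hb
    convert this using 1
    apply ext' <;> simp [mul_a, mul_i]
  have hz : ∀ c : ℤ, (⟨(c : R), 0⟩ : AffG R q T hT) ∈ K := by
    let S : AddSubgroup R :=
      { carrier := {a | (⟨a, 0⟩ : AffG R q T hT) ∈ K}
        add_mem' := fun {a b} ha hb => hadd a b ha hb
        zero_mem' := K.one_mem
        neg_mem' := by
          intro a ha
          have := K.inv_mem ha
          have e : (⟨a, 0⟩ : AffG R q T hT)⁻¹ = ⟨-a, 0⟩ := by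
            apply ext' <;> simp [inv_a, inv_i]
          rw [e] at this
          exact this }
    intro c
    have : (c • (1 : R)) ∈ S := S.zsmul_mem h1 c
    rw [zsmul_one] at this
    exact this
  have h5 : ∀ a : R, (⟨a, 0⟩ : AffG R q T hT) ∈ K := by
    intro a
    obtain ⟨f, rfl⟩ := hc a
    induction f using Polynomial.induction_on' with
    | add f g hf hg => rw [map_add]; exact hadd _ _ hf hg
    | monomial n c =>
      rw [Polynomial.aeval_monomial, mul_comm]
      exact h4' n _ (hz c)
  rw [eq_top_iff]
  intro x _
  have := K.mul_mem (h5 x.a) (h3 x.i)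
  convert this using 1
  apply ext' <;> simp [mul_a, mul_i]

instance [Finite R] : Finite (AffG R q T hT) :=
  Finite.of_injective (fun x : AffG R q T hT => (x.a, x.i)) (by
    intro x y h
    simp only [Prod.mk.injEq] at h
    exact ext' h.1 h.2)

/-- every generating pair has a fixed nontrivial element in its `SigmaSet`. -/
theorem mem_sigma {p r : ℕ} [Fact p.Prime] (hr : 0 < r) (hq : q = p ^ r)
    (ε : R →+* ZMod p) (hε : ε T = 1)
    (hc : Function.Surjective (Polynomial.aeval (R := ℤ) T))
    (hpN : (p : R) * ∑ j ∈ Finset.range q, T ^ j = 0)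
    (x y : AffG R q T hT) (h : closure {x, y} = ⊤) :
    (⟨∑ j ∈ Finset.range q, T ^ j, 0⟩ : AffG R q T hT) ∈ SigmaSet x y := by
  have hp : p.Prime := Fact.out
  have hpq : p ∣ q := hq ▸ dvd_pow_self p hr.ne'
  set N := ∑ j ∈ Finset.range q, T ^ j with hN
  have hq1 : 1 < q := hq ▸ Nat.one_lt_pow hr.ne' hp.one_lt
  have : Fact (1 < q) := ⟨hq1⟩
  -- the projection to `ZMod p`
  let ρ : ZMod q →+* ZMod p := ZMod.castHom hpq (ZMod p)
  have key : ∀ w : AffG R q T hT, ε w.a ≠ 0 → ρ w.i ≠ 0 →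
      (⟨N, 0⟩ : AffG R q T hT) ∈ zpowers w := by
    intro w hw1 hw2
    -- find k with k * i = 1
    have hco : IsUnit w.i := by
      have h1 : ρ w.i = ((w.i.val : ℕ) : ZMod p) := by
        conv_lhs => rw [← ZMod.natCast_zmod_val w.i]
        exact map_natCast ρ _
      rw [h1, Ne, ZMod.natCast_eq_zero_iff] at hw2
      have h2 : Nat.Coprime w.i.val q := by
        have h3 : Nat.Coprime w.i.val (p ^ r) :=
          Nat.Coprime.pow_right _ ((Nat.Prime.coprime_iff_not_dvd hp).2 hw2).symm
        exact hq.symm ▸ h3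
      have := (ZMod.isUnit_iff_coprime w.i.val q).2 h2
      rwa [ZMod.natCast_zmod_val] at this
    obtain ⟨v, hv⟩ := hco.exists_left_inv
    have hρv : ρ v ≠ 0 := by
      intro h0
      have := congrArg ρ hv
      rw [map_mul, h0, zero_mul, map_one] at this
      exact zero_ne_one this
    have hw' : w ^ v.val ∈ zpowers w := ⟨(v.val : ℤ), zpow_natCast w v.val⟩
    set w' := w ^ v.val with hw'd
    have hi' : w'.i = 1 := by
      rw [hw'd, pow_eq]; simp [hv]
    have ha' : ε w'.a ≠ 0 := by
      rw [hw'd, pow_eq]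
      simp only [map_mul, map_sum, map_pow, hε, one_pow, Finset.sum_const, Finset.card_range]
      refine mul_ne_zero ?_ hw1
      have h1 : ρ v = ((v.val : ℕ) : ZMod p) := by
        conv_lhs => rw [← ZMod.natCast_zmod_val v]
        exact map_natCast ρ _
      rw [h1] at hρv
      simpa using hρv
    have hTN : T * N = N := by
      have := mul_geom_sum T q
      rw [hT, sub_self, sub_mul, one_mul, sub_eq_zero] at this
      exact this
    have hTkN : ∀ k : ℕ, T ^ k * N = N := by
      intro k
      induction k with
      | zero => simp
      | succ k ih => rw [pow_succ, mul_assoc, hTN, ih]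
    have hfN : ∀ f : Polynomial ℤ, Polynomial.aeval T f * N = (f.eval 1 : ℤ) * N := by
      intro f
      induction f using Polynomial.induction_on' with
      | add f g hf hg => simp only [map_add, add_mul, hf, hg, Polynomial.eval_add, Int.cast_add]
      | monomial n c => simp [Polynomial.aeval_monomial, mul_assoc, hTkN]
    obtain ⟨f, hf⟩ := hc w'.a
    have hεf : ε w'.a = ((f.eval 1 : ℤ) : ZMod p) := by
      rw [← hf]
      clear hf
      induction f using Polynomial.induction_on' with
      | add f g hf hg => simp only [map_add, hf, hg, Polynomial.eval_add, Int.cast_add]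
      | monomial n c => simp [Polynomial.aeval_monomial, hε]
    set k := (ε w'.a)⁻¹.val with hk
    have hmod : (p : ℤ) ∣ k * (f.eval 1) - 1 := by
      rw [← ZMod.intCast_zmod_eq_zero_iff_dvd]
      push_cast
      rw [← hεf, hk, ZMod.natCast_zmod_val, inv_mul_cancel₀ ha', sub_self]
    obtain ⟨d, hd⟩ := hmod
    have hfin : (w' ^ q) ^ k = ⟨N, 0⟩ := by
      rw [pow_eq, pow_eq]
      apply ext'
      · simp only [hi', ZMod.val_one, pow_one, CharP.cast_eq_zero, mul_one,
          ZMod.val_zero, pow_zero, one_pow, Finset.sum_const, Finset.card_range, nsmul_eq_mul]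
        rw [← hN, ← hf, mul_comm N, hfN, ← mul_assoc]
        have e : ((k : R) * ((f.eval 1 : ℤ) : R)) = 1 + (d : R) * (p : R) := by
          have : (k : ℤ) * f.eval 1 = 1 + d * p := by linarith
          exact_mod_cast congrArg (Int.cast : ℤ → R) this
        rw [e, add_mul, mul_assoc, hpN]; simp
      · simp
    rw [← hfin]
    exact Subgroup.pow_mem _ (Subgroup.pow_mem _ hw' _) _
  have hE : ¬ (ε x.a = 0 ∧ ε y.a = 0) := by
    rintro ⟨h1, h2⟩
    have hle : closure {x, y} ≤ (projE (hT := hT) ε hε).ker := by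
      rw [closure_le]
      rintro z (rfl | rfl)
      · exact congrArg Multiplicative.ofAdd h1
      · exact congrArg Multiplicative.ofAdd h2
    rw [h] at hle
    have : (⟨1, 0⟩ : AffG R q T hT) ∈ (projE (hT := hT) ε hε).ker := hle trivial
    have h3 : Multiplicative.ofAdd (ε 1) = Multiplicative.ofAdd (0 : ZMod p) := this
    rw [map_one] at h3
    exact one_ne_zero (Multiplicative.ofAdd.injective h3)
  have hI : ¬ (ρ x.i = 0 ∧ ρ y.i = 0) := by
    rintro ⟨h1, h2⟩
    let φ := (AddMonoidHom.toMultiplicative ρ.toAddMonoidHom).comp (projI (hT := hT))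
    have hle : closure {x, y} ≤ φ.ker := by
      rw [closure_le]
      rintro z (rfl | rfl)
      · exact congrArg Multiplicative.ofAdd h1
      · exact congrArg Multiplicative.ofAdd h2
    rw [h] at hle
    have : (⟨0, 1⟩ : AffG R q T hT) ∈ φ.ker := hle trivial
    have h3 : Multiplicative.ofAdd (ρ 1) = Multiplicative.ofAdd (0 : ZMod p) := this
    rw [map_one] at h3
    exact one_ne_zero (Multiplicative.ofAdd.injective h3)
  have hsub : (⟨N, 0⟩ : AffG R q T hT) ∈ zpowers x ∨ (⟨N, 0⟩ : AffG R q T hT) ∈ zpowers y ∨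
      (⟨N, 0⟩ : AffG R q T hT) ∈ zpowers (x * y) := by
    by_cases hx : ε x.a ≠ 0 ∧ ρ x.i ≠ 0
    · exact Or.inl (key x hx.1 hx.2)
    by_cases hy : ε y.a ≠ 0 ∧ ρ y.i ≠ 0
    · exact Or.inr (Or.inl (key y hy.1 hy.2))
    refine Or.inr (Or.inr (key _ ?_ ?_))
    · simp only [mul_a, map_add, map_mul, map_pow, hε, one_pow, one_mul]
      by_cases h1 : ε x.a = 0
      · rw [h1, zero_add]; tauto
      · have h2 : ρ x.i = 0 := by tauto
        have h3 : ε y.a = 0 := by tauto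
        rw [h3, add_zero]; exact h1
    · simp only [mul_i, map_add]
      by_cases h1 : ρ x.i = 0
      · rw [h1, zero_add]; tauto
      · have h3 : ρ y.i = 0 := by tauto
        rw [h3, add_zero]; exact h1
  unfold SigmaSet
  rw [Set.mem_iUnion]
  refine ⟨1, ?_⟩
  simpa [or_assoc] using hsub

theorem main {p r m n : ℕ} [Fact p.Prime] (hr : 0 < r) (hm : 0 < m) (hq : q = p ^ r)
    [Finite R] (hrn : r ≤ n)
    (ε : R →+* ZMod p) (hε : ε T = 1)
    (hc : Function.Surjective (Polynomial.aeval (R := ℤ) T))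
    (hN : ∑ j ∈ Finset.range q, T ^ j ≠ 0)
    (hpN : (p : R) * ∑ j ∈ Finset.range q, T ^ j = 0)
    (hs : ∀ i : ZMod q, i ≠ 0 → ∑ j ∈ Finset.range (p ^ n), (T ^ i.val) ^ j = 0)
    (hP : (p : R) * ((p ^ n : ℕ) : R) = 0)
    (hcard : Nat.card (AddMonoidHom.mulLeft ((p ^ n : ℕ) : R)).range = p ^ m) :
    Finite (AffG R q T hT) ∧ IsPGroup p (AffG R q T hT) ∧
      (∃ a b : (AffG R q T hT), closure ({a, b} : Set (AffG R q T hT)) = ⊤) ∧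
      ∃ e : ℕ, Monoid.exponent (AffG R q T hT) = p ^ e ∧
        Nat.card (powSubgroup (AffG R q T hT) (p ^ (e - 1))) = p ^ m ∧
        ¬ IsBeauvilleGroup (AffG R q T hT) := by
  have hp : p.Prime := Fact.out
  have hPq : ((p ^ n : ℕ) : ZMod q) = 0 := by
    rw [ZMod.natCast_eq_zero_iff, hq]; exact pow_dvd_pow p hrn
  have hpow : ∀ x : AffG R q T hT, x.i = 0 → x ^ (p ^ n) = ⟨((p ^ n : ℕ) : R) * x.a, 0⟩ := by
    intro x hx
    rw [pow_eq]
    apply ext'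
    · simp [hx]
    · simp only [hPq, zero_mul]
  have hpow' : ∀ x : AffG R q T hT, x.i ≠ 0 → x ^ (p ^ n) = 1 := by
    intro x hx
    rw [pow_eq, hs _ hx, hPq]
    apply ext' <;> simp [one_a, one_i]
  have hann : ∀ x : AffG R q T hT, x ^ (p ^ (n + 1)) = 1 := by
    intro x
    rw [pow_succ, pow_mul]
    by_cases hx : x.i = 0
    · rw [hpow x hx, pow_eq]
      apply ext'
      · simp only [ZMod.val_zero, pow_zero, one_pow, Finset.sum_const, Finset.card_range,
          nsmul_eq_mul, mul_one, one_a]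
        rw [← mul_assoc, hP, zero_mul]
      · simp [one_i]
    · rw [hpow' x hx, one_pow]
  have hPne : ((p ^ n : ℕ) : R) ≠ 0 := by
    intro h0
    have : (AddMonoidHom.mulLeft ((p ^ n : ℕ) : R)).range = ⊥ := by
      rw [h0]
      ext z
      simp [AddMonoidHom.mem_range, eq_comm]
    rw [this, AddSubgroup.card_bot] at hcard
    exact absurd hcard (Nat.one_lt_pow hm.ne' hp.one_lt).ne
  refine ⟨inferInstance, fun x => ⟨n + 1, hann x⟩, ⟨_, _, gen hc⟩, n + 1, ?_, ?_, ?_⟩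
  · have h1 : Monoid.exponent (AffG R q T hT) ∣ p ^ (n + 1) :=
      Monoid.exponent_dvd_of_forall_pow_eq_one hann
    obtain ⟨k, hk, hke⟩ := (Nat.dvd_prime_pow hp).1 h1
    rcases Nat.lt_or_ge k (n + 1) with hlt | hge
    · exfalso
      have h2 : Monoid.exponent (AffG R q T hT) ∣ p ^ n := by
        rw [hke]; exact pow_dvd_pow p (by omega)
      have h3 := (Monoid.exponent_dvd_iff_forall_pow_eq_one).1 h2 (⟨1, 0⟩ : AffG R q T hT)
      rw [hpow _ rfl] at h3
      have := congrArg AffG.a h3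
      rw [one_a] at this
      simp only [mul_one] at this
      exact hPne this
    · rw [hke, le_antisymm hk hge]
  · rw [Nat.add_sub_cancel, ← hcard]
    let H : Subgroup (AffG R q T hT) :=
      { carrier := {x | x.i = 0 ∧ x.a ∈ (AddMonoidHom.mulLeft ((p ^ n : ℕ) : R)).range}
        one_mem' := ⟨rfl, zero_mem _⟩
        mul_mem' := by
          rintro x y ⟨hx, hx'⟩ ⟨hy, hy'⟩
          refine ⟨by rw [mul_i, hx, hy, add_zero], ?_⟩
          rw [mul_a, hx, ZMod.val_zero, pow_zero, one_mul]
          exact add_mem hx' hy'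
        inv_mem' := by
          rintro x ⟨hx, hx'⟩
          refine ⟨by rw [inv_i, hx, neg_zero], ?_⟩
          rw [inv_a, hx, neg_zero, ZMod.val_zero, pow_zero, one_mul]
          exact neg_mem hx' }
    have hH : powSubgroup (AffG R q T hT) (p ^ n) = H := by
      apply le_antisymm
      · unfold powSubgroup
        rw [closure_le]
        rintro _ ⟨x, rfl⟩
        by_cases hx : x.i = 0
        · show x ^ (p ^ n) ∈ H
          rw [hpow x hx]
          exact ⟨rfl, x.a, rfl⟩
        · show x ^ (p ^ n) ∈ H
          rw [hpow' x hx]; exact H.one_mem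
      · rintro x ⟨hx, c, hc⟩
        apply Subgroup.subset_closure
        refine ⟨⟨c, 0⟩, ?_⟩
        show (⟨c, 0⟩ : AffG R q T hT) ^ (p ^ n) = x
        rw [hpow _ rfl]
        exact ext' hc hx.symm
    rw [hH]
    refine Nat.card_congr
      { toFun := fun x => ⟨x.1.a, x.2.2⟩
        invFun := fun c => ⟨⟨c.1, 0⟩, rfl, c.2⟩
        left_inv := fun x => Subtype.ext (ext' rfl x.2.1.symm)
        right_inv := fun c => rfl }
  · rintro ⟨x₁, y₁, x₂, y₂, h1, h2, h3⟩
    have hm1 := mem_sigma hr hq ε hε hc hpN x₁ y₁ h1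
    have hm2 := mem_sigma hr hq ε hε hc hpN x₂ y₂ h2
    have : (⟨∑ j ∈ Finset.range q, T ^ j, 0⟩ : AffG R q T hT) ∈ ({1} : Set (AffG R q T hT)) :=
      h3 ▸ ⟨hm1, hm2⟩
    exact hN (congrArg AffG.a (Set.mem_singleton_iff.1 this))

end AffG

namespace PolyConstr

open Polynomial

variable (p m : ℕ) [Fact p.Prime]

/-- reduction mod `p`. -/
noncomputable abbrev red : ℤ[X] →+* (ZMod p)[X] := mapRingHom (Int.castRingHom (ZMod p))

/-- the first ideal. -/
noncomputable def I1 : Ideal ℤ[X] :=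
  Ideal.span {cyclotomic (p ^ m) ℤ, C ((p : ℤ) ^ (m + 2)), C ((p : ℤ) ^ (m + 1)) * (X - 1) ^ m}

/-- the second ideal. -/
noncomputable def I2 : Ideal ℤ[X] :=
  (Ideal.span {((X - 1) ^ (p ^ m) : (ZMod p)[X])}).comap (red p)

/-- the ideal defining the ring. -/
noncomputable def I : Ideal ℤ[X] := I1 p m ⊓ I2 p m

theorem mem_I2 (f : ℤ[X]) : f ∈ I2 p m ↔ (X - 1) ^ (p ^ m) ∣ red p f := by
  rw [I2, Ideal.mem_comap, Ideal.mem_span_singleton]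

theorem red_surj : Function.Surjective (red p) := by
  have : Function.Surjective (Int.castRingHom (ZMod p)) := ZMod.ringHom_surjective _
  exact Polynomial.map_surjective _ this

theorem red_C : red p (C (p : ℤ)) = 0 := by
  simp [red]

theorem red_eq_zero {f : ℤ[X]} (h : red p f = 0) : C (p : ℤ) ∣ f := by
  rw [C_dvd_iff_dvd_coeff]
  intro i
  have := congrArg (fun g => coeff g i) h
  simp only [red, coe_mapRingHom, coeff_map, coeff_zero, eq_intCast] at this
  exact (ZMod.intCast_zmod_eq_zero_iff_dvd _ _).1 this

theorem red_cyc (hm : 0 < m) :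
    red p (cyclotomic (p ^ m) ℤ) = (X - 1) ^ (p ^ m - p ^ (m - 1)) := by
  have hp : p.Prime := Fact.out
  have := cyclotomic_mul_prime_pow_eq (ZMod p) (p := p) (m := 1) hp.not_dvd_one hm
  rw [mul_one, cyclotomic_one] at this
  rw [← this]
  simp only [red, coe_mapRingHom]
  exact map_cyclotomic_int _ _

theorem le_deg (hm : 0 < m) : m ≤ p ^ m - p ^ (m - 1) := by
  have hp : p.Prime := Fact.out
  obtain ⟨k, rfl⟩ : ∃ k, m = k + 1 := ⟨m - 1, by omega⟩
  rw [Nat.add_sub_cancel, pow_succ]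
  have h1 : k < p ^ k := Nat.lt_pow_self hp.one_lt
  have h2 : p ^ k * 2 ≤ p ^ k * p := Nat.mul_le_mul_left _ hp.two_le
  omega

theorem C_prime : Prime (C (p : ℤ)) := by
  rw [prime_C_iff]
  exact Nat.prime_iff_prime_int.1 Fact.out

theorem mem_iff (hm : 0 < m) (f : ℤ[X]) :
    C ((p : ℤ) ^ (m + 1)) * f ∈ I p m ↔ (X - 1) ^ m ∣ red p f := by
  have hX : red p (X - 1) = X - 1 := by simp [red]
  constructor
  · rintro ⟨h, -⟩
    have h : C ((p : ℤ) ^ (m + 1)) * f ∈ I1 p m := h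
    rw [I1, Ideal.mem_span_insert] at h
    obtain ⟨a, z, hz, h⟩ := h
    rw [Ideal.mem_span_insert] at hz
    obtain ⟨b, z', hz', rfl⟩ := hz
    rw [Ideal.mem_span_singleton'] at hz'
    obtain ⟨c, rfl⟩ := hz'
    have hd : C (p : ℤ) ^ (m + 1) ∣ a * cyclotomic (p ^ m) ℤ := by
      refine ⟨f - b * C (p : ℤ) - c * (X - 1) ^ m, ?_⟩
      have : a * cyclotomic (p ^ m) ℤ = C ((p : ℤ) ^ (m + 1)) * f -
        (b * C ((p : ℤ) ^ (m + 2)) + c * (C ((p : ℤ) ^ (m + 1)) * (X - 1) ^ m)) := by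
        rw [h]; ring
      rw [this]
      simp only [C_pow]
      ring
    have hnd : ¬ C (p : ℤ) ∣ cyclotomic (p ^ m) ℤ := by
      rintro ⟨g, hg⟩
      have h1 := red_cyc p m hm
      rw [hg, map_mul, red_C, zero_mul] at h1
      exact pow_ne_zero _ (X_sub_C_ne_zero (1 : ZMod p)) (by rw [C_1]; exact h1.symm)
    obtain ⟨a', rfl⟩ := (C_prime p).pow_dvd_of_dvd_mul_right _ hnd hd
    have hf : f = a' * cyclotomic (p ^ m) ℤ + b * C (p : ℤ) + c * (X - 1) ^ m := by
      have hne : (C (p : ℤ)) ^ (m + 1) ≠ 0 := pow_ne_zero _ (C_prime p).ne_zero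
      apply mul_left_cancel₀ hne
      rw [← C_pow, h]
      simp only [C_pow]
      ring
    rw [hf, map_add, map_add, map_mul, map_mul, map_mul, red_C, mul_zero, add_zero, red_cyc p m hm,
      map_pow, hX]
    exact dvd_add (Dvd.dvd.mul_left (pow_dvd_pow _ (le_deg p m hm)) _) (dvd_mul_left _ _)
  · rintro ⟨g, hg⟩
    obtain ⟨g', rfl⟩ := red_surj p g
    have h0 : red p (f - (X - 1) ^ m * g') = 0 := by
      rw [map_sub, hg, map_mul, map_pow, hX, sub_self]
    obtain ⟨h, hh⟩ := red_eq_zero p h0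
    have hf : f = (X - 1) ^ m * g' + C (p : ℤ) * h := by rw [← hh]; ring
    refine ⟨?_, ?_⟩
    · show _ ∈ I1 p m
      rw [hf]
      have e : C ((p : ℤ) ^ (m + 1)) * ((X - 1) ^ m * g' + C (p : ℤ) * h) =
        g' * (C ((p : ℤ) ^ (m + 1)) * (X - 1) ^ m) + h * C ((p : ℤ) ^ (m + 2)) := by
        simp only [C_pow]; ring
      rw [e]
      exact add_mem (Ideal.mul_mem_left _ _ (Ideal.subset_span (by simp)))
        (Ideal.mul_mem_left _ _ (Ideal.subset_span (by simp)))
    · show _ ∈ I2 p m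
      rw [mem_I2, map_mul, C_pow, map_pow, red_C, zero_pow (by omega), zero_mul]
      exact dvd_zero _

theorem cyc_dvd (i k : ℕ) (hi : ¬ p ^ m ∣ i) (hk : p ^ m ∣ i * k) :
    cyclotomic (p ^ m) ℤ ∣ ∑ j ∈ Finset.range k, (X ^ i : ℤ[X]) ^ j := by
  have hp : p.Prime := Fact.out
  have hq0 : 0 < p ^ m := pow_pos hp.pos _
  have hpr : Prime (cyclotomic (p ^ m) ℤ) := (cyclotomic.irreducible hq0).prime
  have h1 : cyclotomic (p ^ m) ℤ ∣ (X ^ i : ℤ[X]) ^ k - 1 := by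
    rw [← pow_mul]
    refine (cyclotomic.dvd_X_pow_sub_one (p ^ m) ℤ).trans ?_
    obtain ⟨d, hd⟩ := hk
    rw [hd, pow_mul]
    simpa using sub_dvd_pow_sub_pow (X ^ (p ^ m) : ℤ[X]) 1 d
  rw [← geom_sum_mul] at h1
  refine (hpr.dvd_or_dvd h1).resolve_right ?_
  rintro ⟨g, hg⟩
  have hζ := Complex.isPrimitiveRoot_exp (p ^ m) hq0.ne'
  have hroot := hζ.isRoot_cyclotomic hq0
  set ζ := Complex.exp (2 * Real.pi * Complex.I / ((p ^ m : ℕ) : ℂ)) with hζd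
  have h2 := congrArg (aeval ζ) hg
  have h3 : aeval ζ (cyclotomic (p ^ m) ℤ) = 0 := by
    rw [← map_cyclotomic_int] at hroot
    rw [aeval_def, eval₂_eq_eval_map]
    exact hroot
  rw [map_mul, h3, zero_mul] at h2
  simp only [map_sub, map_pow, aeval_X, map_one, sub_eq_zero] at h2
  exact hi (hζ.dvd_of_pow_eq_one _ h2)

theorem geom_char (i k : ℕ) (hi : i ≠ 0) :
    ∑ j ∈ Finset.range (p ^ k), (X ^ i : (ZMod p)[X]) ^ j = (X ^ i - 1) ^ (p ^ k - 1) := by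
  have hp : p.Prime := Fact.out
  have hne : (X ^ i - 1 : (ZMod p)[X]) ≠ 0 := (monic_X_pow_sub_C (1 : ZMod p) hi).ne_zero
  apply mul_right_cancel₀ hne
  rw [geom_sum_mul, ← pow_succ, Nat.sub_add_cancel (Nat.one_le_pow _ _ hp.pos),
    sub_pow_char_pow, one_pow]

theorem cyc_mem {f : ℤ[X]} (h : cyclotomic (p ^ m) ℤ ∣ f) : f ∈ I1 p m := by
  obtain ⟨g, rfl⟩ := h
  exact Ideal.mul_mem_right _ _ (Ideal.subset_span (by simp))

theorem final (hm : 0 < m) :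
    ∃ (G : Type) (_ : Group G), Finite G ∧ IsPGroup p G ∧
      (∃ a b : G, closure ({a, b} : Set G) = ⊤) ∧
      ∃ e : ℕ, Monoid.exponent G = p ^ e ∧
        Nat.card (powSubgroup G (p ^ (e - 1))) = p ^ m ∧
        ¬ IsBeauvilleGroup G := by
  have hp : p.Prime := Fact.out
  have hq0 : 0 < p ^ m := pow_pos hp.pos _
  have hq1 : 1 < p ^ m := Nat.one_lt_pow hm.ne' hp.one_lt
  have : NeZero (p ^ m) := ⟨hq0.ne'⟩
  let R := ℤ[X] ⧸ I p m
  let π : ℤ[X] →+* R := Ideal.Quotient.mk (I p m)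
  have hπ : Function.Surjective π := Ideal.Quotient.mk_surjective
  have hπ0 : ∀ f, π f = 0 ↔ f ∈ I p m := fun f => Ideal.Quotient.eq_zero_iff_mem
  let T : R := π X
  have hπT : ∀ f, aeval (R := ℤ) T f = π f := by
    intro f
    have : (aeval (R := ℤ) T : ℤ[X] →ₐ[ℤ] R).toRingHom = π := by
      apply Polynomial.ringHom_ext
      · intro a; simp
      · simp [T]
    exact congrArg (fun g : ℤ[X] →+* R => g f) this
  have hc : Function.Surjective (aeval (R := ℤ) T) := by
    intro y
    obtain ⟨f, rfl⟩ := hπ y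
    exact ⟨f, hπT f⟩
  have hmonic : (X ^ (p ^ m) - 1 : ℤ[X]).Monic := monic_X_pow_sub_C (1 : ℤ) hq0.ne'
  have hXq : (X ^ (p ^ m) - 1 : ℤ[X]) ∈ I p m := by
    refine ⟨cyc_mem p m (cyclotomic.dvd_X_pow_sub_one _ _), ?_⟩
    show _ ∈ I2 p m
    rw [mem_I2]
    have : red p (X ^ (p ^ m) - 1) = (X - 1) ^ (p ^ m) := by
      rw [sub_pow_char_pow]; simp [red]
    rw [this]
  have hT : T ^ (p ^ m) = 1 := by
    have := (hπ0 _).2 hXq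
    rwa [map_sub, map_pow, map_one, sub_eq_zero] at this
  have hPC : ∀ k : ℕ, ((p ^ k : ℕ) : R) = π (C ((p : ℤ) ^ k)) := by
    intro k; simp
  have hpC : (p : R) = π (C (p : ℤ)) := by simp
  have hP : (p : R) * ((p ^ (m + 1) : ℕ) : R) = 0 := by
    rw [mul_comm, hPC, hpC, ← map_mul, hπ0, mem_iff p m hm, red_C]
    exact dvd_zero _
  have hNpoly : ∑ j ∈ Finset.range (p ^ m), T ^ j =
      π (∑ j ∈ Finset.range (p ^ m), (X ^ 1 : ℤ[X]) ^ j) := by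
    simp [T]
  have hredN : red p (∑ j ∈ Finset.range (p ^ m), (X ^ 1 : ℤ[X]) ^ j) =
      (X - 1) ^ (p ^ m - 1) := by
    have := geom_char p 1 m one_ne_zero
    rw [pow_one] at this ⊢
    rw [← this]
    simp [red]
  have hN : ∑ j ∈ Finset.range (p ^ m), T ^ j ≠ 0 := by
    rw [hNpoly, Ne, hπ0]
    rintro ⟨-, h⟩
    have h : _ ∈ I2 p m := h
    rw [mem_I2, hredN] at h
    have hX0 : (X - 1 : (ZMod p)[X]) ≠ 0 := X_sub_C_ne_zero (1 : ZMod p)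
    have hXu : ¬ IsUnit (X - 1 : (ZMod p)[X]) := not_isUnit_X_sub_C (1 : ZMod p)
    rw [pow_dvd_pow_iff hX0 hXu] at h
    omega
  have hpN : (p : R) * ∑ j ∈ Finset.range (p ^ m), T ^ j = 0 := by
    rw [hNpoly, hpC, ← map_mul, hπ0]
    refine ⟨Ideal.mul_mem_left _ _ (cyc_mem p m (cyc_dvd p m 1 (p ^ m) ?_ (by simp))), ?_⟩
    · rw [Nat.dvd_one]; omega
    · show _ ∈ I2 p m
      rw [mem_I2, map_mul, red_C, zero_mul]
      exact dvd_zero _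
  have hs : ∀ i : ZMod (p ^ m), i ≠ 0 →
      ∑ j ∈ Finset.range (p ^ (m + 1)), (T ^ i.val) ^ j = 0 := by
    intro i hi
    have hi0 : i.val ≠ 0 := by rwa [Ne, ZMod.val_eq_zero]
    have hlt := ZMod.val_lt i
    have e : ∑ j ∈ Finset.range (p ^ (m + 1)), (T ^ i.val) ^ j =
      π (∑ j ∈ Finset.range (p ^ (m + 1)), (X ^ i.val : ℤ[X]) ^ j) := by simp [T]
    rw [e, hπ0]
    refine ⟨cyc_mem p m (cyc_dvd p m _ _ ?_ ?_), ?_⟩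
    · intro h; exact absurd (Nat.le_of_dvd (Nat.pos_of_ne_zero hi0) h) (by omega)
    · exact Dvd.dvd.mul_left (pow_dvd_pow p (by omega)) _
    · show _ ∈ I2 p m
      rw [mem_I2]
      have e2 : red p (∑ j ∈ Finset.range (p ^ (m + 1)), (X ^ i.val : ℤ[X]) ^ j) =
          (X ^ i.val - 1) ^ (p ^ (m + 1) - 1) := by
        rw [← geom_char p _ _ hi0]; simp [red]
      rw [e2]
      have h1 : (X - 1 : (ZMod p)[X]) ∣ X ^ i.val - 1 := by
        simpa using sub_dvd_pow_sub_pow (X : (ZMod p)[X]) 1 i.val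
      have h2 : p ^ m ≤ p ^ (m + 1) - 1 := by
        have := Nat.pow_lt_pow_right hp.one_lt (Nat.lt_succ_self m)
        rw [Nat.succ_eq_add_one] at this
        omega
      exact (pow_dvd_pow _ h2).trans (pow_dvd_pow_of_dvd h1 _)
  -- augmentation
  let ε : R →+* ZMod p := Ideal.Quotient.lift (I p m) ((evalRingHom (1 : ZMod p)).comp (red p)) (by
    rintro a ⟨-, ha⟩
    have ha : a ∈ I2 p m := ha
    rw [mem_I2] at ha
    obtain ⟨g, hg⟩ := ha
    rw [RingHom.comp_apply, hg]
    simp)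
  have hε : ε T = 1 := by
    show ε (Ideal.Quotient.mk (I p m) X) = 1
    rw [Ideal.Quotient.lift_mk]
    simp [red]
  -- finiteness
  have hfin : Finite R := by
    have := hmonic.finite_adjoinRoot
    let F : AdjoinRoot (X ^ (p ^ m) - 1 : ℤ[X]) →ₐ[ℤ] R :=
      AdjoinRoot.liftAlgHom _ (Algebra.ofId ℤ R) T (by simp [hT])
    have hF : Function.Surjective F := by
      intro y
      obtain ⟨f, rfl⟩ := hc y
      refine ⟨AdjoinRoot.mk _ f, ?_⟩
      rw [← AdjoinRoot.aeval_eq, ← Polynomial.aeval_algHom_apply]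
      simp [F]
    have : Module.Finite ℤ R := Module.Finite.of_surjective F.toLinearMap hF
    apply Module.finite_of_fg_torsion
    intro x
    have hne : ((p : ℤ) ^ (m + 2)) ≠ 0 := pow_ne_zero _ (by exact_mod_cast hp.ne_zero)
    refine ⟨⟨(p : ℤ) ^ (m + 2), mem_nonZeroDivisors_of_ne_zero hne⟩, ?_⟩
    show ((p : ℤ) ^ (m + 2)) • x = 0
    rw [zsmul_eq_mul]
    have : (((p : ℤ) ^ (m + 2) : ℤ) : R) = 0 := by
      rw [← hP]; push_cast; ring
    rw [this, zero_mul]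
  -- cardinality
  have hcard : Nat.card (AddMonoidHom.mulLeft ((p ^ (m + 1) : ℕ) : R)).range = p ^ m := by
    let φ : ℤ[X] →+ R := (AddMonoidHom.mulLeft ((p ^ (m + 1) : ℕ) : R)).comp π.toAddMonoidHom
    have hφ : φ.range = (AddMonoidHom.mulLeft ((p ^ (m + 1) : ℕ) : R)).range := by
      ext z
      constructor
      · rintro ⟨f, rfl⟩; exact ⟨π f, rfl⟩
      · rintro ⟨y, rfl⟩
        obtain ⟨f, rfl⟩ := hπ y
        exact ⟨f, rfl⟩
    have hmon : ((X - 1) ^ m : (ZMod p)[X]).Monic := (monic_X_sub_C (1 : ZMod p)).pow m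
    let ψ : ℤ[X] →+ AdjoinRoot ((X - 1) ^ m : (ZMod p)[X]) :=
      ((AdjoinRoot.mk ((X - 1) ^ m : (ZMod p)[X])).comp (red p)).toAddMonoidHom
    have hψ : Function.Surjective ψ := by
      intro y
      obtain ⟨g, rfl⟩ := AdjoinRoot.mk_surjective y
      obtain ⟨f, rfl⟩ := red_surj p g
      exact ⟨f, rfl⟩
    have hker : φ.ker = ψ.ker := by
      ext f
      rw [AddMonoidHom.mem_ker, AddMonoidHom.mem_ker]
      have h1 : φ f = π (C ((p : ℤ) ^ (m + 1)) * f) := by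
        rw [map_mul, ← hPC]; rfl
      have h2 : ψ f = AdjoinRoot.mk ((X - 1) ^ m : (ZMod p)[X]) (red p f) := rfl
      rw [h1, h2, hπ0, mem_iff p m hm, AdjoinRoot.mk_eq_zero]
    rw [← hφ, ← Nat.card_congr (QuotientAddGroup.quotientKerEquivRange φ).toEquiv, hker,
      Nat.card_congr (QuotientAddGroup.quotientKerEquivOfSurjective ψ hψ).toEquiv]
    have hfm := hmon.finite_adjoinRoot
    rw [Module.natCard_eq_pow_finrank (K := ZMod p), Nat.card_zmod,
      (AdjoinRoot.powerBasis' hmon).finrank, AdjoinRoot.powerBasis'_dim]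
    congr 1
    have hdeg := (monic_X_sub_C (1 : ZMod p)).natDegree_pow m
    rw [natDegree_X_sub_C, mul_one, C_1] at hdeg
    exact hdeg
  exact ⟨AffG R (p ^ m) T hT, inferInstance,
    AffG.main (r := m) (n := m + 1) hm hm rfl (by omega) ε hε hc hN hpN hs hP hcard⟩

end PolyConstr

theorem exists_non_beauville_group_with_power_subgroup_of_any_size
    {p : ℕ} (hp : p.Prime) (hp5 : 5 ≤ p) (m : ℕ) (hm : 0 < m) :
    ∃ (G : Type) (_ : Group G), Finite G ∧ IsPGroup p G ∧
      (∃ a b : G, closure ({a, b} : Set G) = ⊤) ∧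
      ∃ e : ℕ, Monoid.exponent G = p ^ e ∧
        Nat.card (powSubgroup G (p ^ (e - 1))) = p ^ m ∧
        ¬ IsBeauvilleGroup G := by
  have : Fact p.Prime := ⟨hp⟩
  exact PolyConstr.final p m hm
end

section
/- Let p be an odd prime and set n₀ = 2 if p > 3 and n₀ = 5 if p = 3. Then for every integer n ≥ n₀ there exists a Beauville group of order p^n. In particular, for every n ≥ 5 there exists a Beauville 3-group of order 3^n. -/
open Subgroup

/-- Membership in `SigmaSet`. -/
lemma mem_SigmaSet_iff {G : Type*} [Group G] (x y z : G) :
    z ∈ SigmaSet x y ↔ ∃ u ∈ ({x, y, x * y} : Set G), ∃ (g : G) (i : ℤ), g * u ^ i * g⁻¹ = z := by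
  simp only [SigmaSet, Set.mem_iUnion, Set.mem_union, SetLike.mem_coe, mem_zpowers_iff, conj_zpow,
    Set.mem_insert_iff, Set.mem_singleton_iff]
  constructor
  · rintro ⟨g, (⟨i, h⟩ | ⟨i, h⟩) | ⟨i, h⟩⟩
    · exact ⟨x, by simp, g, i, h⟩
    · exact ⟨y, by simp, g, i, h⟩
    · exact ⟨x * y, by simp, g, i, h⟩
  · rintro ⟨u, rfl | rfl | rfl, g, i, h⟩
    · exact ⟨g, Or.inl (Or.inl ⟨i, h⟩)⟩
    · exact ⟨g, Or.inl (Or.inr ⟨i, h⟩)⟩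
    · exact ⟨g, Or.inr ⟨i, h⟩⟩

/-- A convenient criterion for being a Beauville group. -/
lemma isBeauville_of {G : Type*} [Group G] (x₁ y₁ x₂ y₂ : G)
    (h₁ : closure {x₁, y₁} = ⊤) (h₂ : closure {x₂, y₂} = ⊤)
    (h : ∀ u ∈ ({x₁, y₁, x₁ * y₁} : Set G), ∀ v ∈ ({x₂, y₂, x₂ * y₂} : Set G),
      ∀ (g : G) (i j : ℤ), g * u ^ i * g⁻¹ = v ^ j → u ^ i = 1) : IsBeauvilleGroup G := by
  refine ⟨x₁, y₁, x₂, y₂, h₁, h₂, ?_⟩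
  ext z
  simp only [Set.mem_inter_iff, mem_SigmaSet_iff, Set.mem_singleton_iff]
  constructor
  · rintro ⟨⟨u, hu, g, i, h3⟩, ⟨v, hv, k, j, h4⟩⟩
    have := h u hu v hv (k⁻¹ * g) i j (by
      have h5 : g * u ^ i * g⁻¹ = k * v ^ j * k⁻¹ := h3.trans h4.symm
      calc k⁻¹ * g * u ^ i * (k⁻¹ * g)⁻¹ = k⁻¹ * (g * u ^ i * g⁻¹) * k := by group
        _ = v ^ j := by rw [h5]; group)
    rw [← h3, this]; group
  · rintro rfl
    exact ⟨⟨x₁, by simp, 1, 0, by simp⟩, ⟨x₂, by simp, 1, 0, by simp⟩⟩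

/-- In a finite `p`-group a set generates as soon as it normally generates. -/
lemma closure_eq_top_of_normal {G : Type*} [Group G] [Finite G] {p : ℕ} [Fact p.Prime]
    (hG : IsPGroup p G) (S : Set G)
    (h : ∀ M : Subgroup G, M.Normal → S ⊆ M → M = ⊤) : closure S = ⊤ := by
  by_contra hne
  obtain ⟨M, hM, hle⟩ := (eq_top_or_exists_le_coatom (closure S)).resolve_left hne
  have hn : Group.IsNilpotent G := hG.isNilpotent
  have hnorm : M.Normal := NormalizerCondition.normal_of_coatom M
    (Group.normalizerCondition_of_isNilpotent) hM
  exact hM.1 (h M hnorm (Subgroup.subset_closure.trans hle))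

/-! ### The case `p > 3` -/

/-- A Heisenberg-type group attached to a ring homomorphism `R → S`. -/
@[ext]
structure Heis {R S : Type} [CommRing R] [CommRing S] (f : R →+* S) where
  a : R
  b : R
  c : S

namespace Heis

variable {R S : Type} [CommRing R] [CommRing S] {f : R →+* S}

instance : Mul (Heis f) := ⟨fun u v => ⟨u.a + v.a, u.b + v.b, u.c + v.c + f u.a * f v.b⟩⟩
instance : One (Heis f) := ⟨⟨0, 0, 0⟩⟩
instance : Inv (Heis f) := ⟨fun u => ⟨-u.a, -u.b, -u.c + f u.a * f u.b⟩⟩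

@[simp] lemma mul_a (u v : Heis f) : (u * v).a = u.a + v.a := rfl
@[simp] lemma mul_b (u v : Heis f) : (u * v).b = u.b + v.b := rfl
@[simp] lemma mul_c (u v : Heis f) : (u * v).c = u.c + v.c + f u.a * f v.b := rfl
@[simp] lemma one_a : (1 : Heis f).a = 0 := rfl
@[simp] lemma one_b : (1 : Heis f).b = 0 := rfl
@[simp] lemma one_c : (1 : Heis f).c = 0 := rfl
@[simp] lemma inv_a (u : Heis f) : (u⁻¹).a = -u.a := rfl
@[simp] lemma inv_b (u : Heis f) : (u⁻¹).b = -u.b := rfl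
@[simp] lemma inv_c (u : Heis f) : (u⁻¹).c = -u.c + f u.a * f u.b := rfl

instance : Group (Heis f) where
  mul_assoc u v w := by ext <;> simp <;> ring
  one_mul u := by ext <;> simp
  mul_one u := by ext <;> simp
  inv_mul_cancel u := by ext <;> simp

/-- The underlying product. -/
def equivProd : Heis f ≃ R × R × S where
  toFun u := (u.a, u.b, u.c)
  invFun t := ⟨t.1, t.2.1, t.2.2⟩
  left_inv _ := rfl
  right_inv _ := rfl

/-- First coordinate as a homomorphism. -/
def homA : Heis f →* Multiplicative R where
  toFun u := Multiplicative.ofAdd u.a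
  map_one' := rfl
  map_mul' _ _ := rfl

/-- Second coordinate as a homomorphism. -/
def homB : Heis f →* Multiplicative R where
  toFun u := Multiplicative.ofAdd u.b
  map_one' := rfl
  map_mul' _ _ := rfl

lemma zpow_a (u : Heis f) (i : ℤ) : (u ^ i).a = i * u.a := by
  have := map_zpow (homA (f := f)) u i
  have h2 := congrArg Multiplicative.toAdd this
  simpa [homA, zsmul_eq_mul] using h2

lemma zpow_b (u : Heis f) (i : ℤ) : (u ^ i).b = i * u.b := by
  have := map_zpow (homB (f := f)) u i
  have h2 := congrArg Multiplicative.toAdd this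
  simpa [homB, zsmul_eq_mul] using h2

lemma pow_eq (u : Heis f) (n : ℕ) :
    u ^ n = ⟨n * u.a, n * u.b, n * u.c + (n.choose 2 : ℕ) * (f u.a * f u.b)⟩ := by
  induction n with
  | zero => ext <;> simp
  | succ n ih =>
    rw [pow_succ, ih]
    ext
    · simp; ring
    · simp; ring
    · have : (n + 1).choose 2 = n + n.choose 2 := by
        rw [Nat.choose_succ_succ' n 1]; simp
      simp [this]; ring

end Heis

lemma exists_large (p : ℕ) (hp : p.Prime) (hp3 : 3 < p) (k e : ℕ) (hek : e ≤ k) :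
    ∃ (G : Type) (_ : Group G), Finite G ∧
        Nat.card G = p ^ (2 * k + e) ∧ IsBeauvilleGroup G := by
  have : Fact p.Prime := ⟨hp⟩
  have hq0 : p ^ k ≠ 0 := pow_ne_zero _ hp.ne_zero
  have : NeZero (p ^ k) := ⟨hq0⟩
  have : NeZero (p ^ e) := ⟨pow_ne_zero _ hp.ne_zero⟩
  let f : ZMod (p ^ k) →+* ZMod (p ^ e) := ZMod.castHom (pow_dvd_pow p hek) _
  have hfin : Finite (Heis f) := Finite.of_equiv _ Heis.equivProd.symm
  have hcard : Nat.card (Heis f) = p ^ (2 * k + e) := by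
    rw [Nat.card_congr Heis.equivProd]
    simp; ring
  have hP : IsPGroup p (Heis f) := IsPGroup.of_card hcard
  refine ⟨Heis f, inferInstance, hfin, hcard, ?_⟩
  let x : Heis f := ⟨1, 0, 0⟩
  let y : Heis f := ⟨0, 1, 0⟩
  have hgen : closure {x, y} = ⊤ := by
    rw [eq_top_iff]
    rintro ⟨a, b, c⟩ -
    have hx : x ∈ closure {x, y} := subset_closure (by simp)
    have hy : y ∈ closure {x, y} := subset_closure (by simp)
    have hz : x * y * x⁻¹ * y⁻¹ ∈ closure {x, y} :=
      mul_mem (mul_mem (mul_mem hx hy) (inv_mem hx)) (inv_mem hy)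
    have : (⟨a, b, c⟩ : Heis f) = y ^ b.val * x ^ a.val * (x * y * x⁻¹ * y⁻¹) ^ c.val := by
      simp only [Heis.pow_eq]
      ext <;> simp [x, y]
    rw [this]
    exact mul_mem (mul_mem (pow_mem hy _) (pow_mem hx _)) (pow_mem hz _)
  have hexp : ∀ u : Heis f, u ^ (p ^ k) = 1 := by
    intro u
    have h1 : ((p ^ k : ℕ) : ZMod (p ^ e)) = 0 :=
      (ZMod.natCast_eq_zero_iff _ _).2 (pow_dvd_pow p hek)
    have h2 : (((p ^ k).choose 2 : ℕ) : ZMod (p ^ e)) = 0 := by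
      have h3 : p ^ k ∣ (p ^ k).choose 2 := by
        have hodd : Odd (p ^ k) := (hp.odd_of_ne_two (by omega)).pow
        obtain ⟨m, hm⟩ := hodd
        rw [Nat.choose_two_right]
        have : p ^ k * (p ^ k - 1) / 2 = p ^ k * m := by
          have h4 : p ^ k - 1 = 2 * m := by omega
          rw [h4, show p ^ k * (2 * m) = 2 * (p ^ k * m) by ring]
          exact Nat.mul_div_cancel_left _ (by norm_num)
        rw [this]
        exact dvd_mul_right _ _
      exact (ZMod.natCast_eq_zero_iff _ _).2 ((pow_dvd_pow p hek).trans h3)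
    have h0 : ((p ^ k : ℕ) : ZMod (p ^ k)) = 0 := ZMod.natCast_self _
    rw [Heis.pow_eq, h0, h1, h2]
    ext <;> simp
  have hc2 : IsUnit (2 : ZMod (p ^ k)) := by
    have := (ZMod.isUnit_iff_coprime 2 (p ^ k)).2
      (Nat.Coprime.pow_right k ((Nat.coprime_primes Nat.prime_two hp).2 (by omega)))
    simpa using this
  have hc3 : Nat.Coprime 3 (p ^ k) :=
    Nat.Coprime.pow_right k ((Nat.coprime_primes Nat.prime_three hp).2 (by omega))
  have key : ∀ (u v : Heis f), IsUnit (u.a * v.b - u.b * v.a) → ∀ (g : Heis f) (i j : ℤ),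
      g * u ^ i * g⁻¹ = v ^ j → u ^ i = 1 := by
    intro u v huv g i j h
    have ha := congrArg Heis.a h
    have hb := congrArg Heis.b h
    simp only [Heis.mul_a, Heis.mul_b, Heis.inv_a, Heis.inv_b, Heis.zpow_a, Heis.zpow_b] at ha hb
    have h0 : (i : ZMod (p ^ k)) * (u.a * v.b - u.b * v.a) = 0 := by
      linear_combination v.b * ha - v.a * hb
    have hi : (i : ZMod (p ^ k)) = 0 := (huv.mul_left_eq_zero).1 h0
    obtain ⟨m, rfl⟩ := (ZMod.intCast_zmod_eq_zero_iff_dvd i (p ^ k)).1 hi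
    rw [zpow_mul, zpow_natCast, hexp, one_zpow]
  refine isBeauville_of x y (x * y ^ 2) (x * y⁻¹) hgen ?_ ?_
  · refine closure_eq_top_of_normal hP _ fun M hM hS => ?_
    have h1 : x * y ^ 2 ∈ M := hS (by simp)
    have h2 : x * y⁻¹ ∈ M := hS (by simp)
    have hxy : (x : Heis f ⧸ M) = y := by
      have := (QuotientGroup.eq_one_iff (N := M) _).2 h2
      rw [QuotientGroup.mk_mul, QuotientGroup.mk_inv] at this
      exact mul_inv_eq_one.1 this
    have hy3 : (y : Heis f ⧸ M) ^ 3 = 1 := by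
      have := (QuotientGroup.eq_one_iff (N := M) _).2 h1
      rw [QuotientGroup.mk_mul, QuotientGroup.mk_pow, hxy] at this
      rw [pow_succ']; exact this
    have hyq : (y : Heis f ⧸ M) ^ (p ^ k) = 1 := by
      rw [← QuotientGroup.mk_pow, hexp, QuotientGroup.mk_one]
    have hy1 : (y : Heis f ⧸ M) = 1 := by
      have h5 := Nat.dvd_gcd (orderOf_dvd_of_pow_eq_one hy3) (orderOf_dvd_of_pow_eq_one hyq)
      rw [hc3.gcd_eq_one] at h5
      exact orderOf_eq_one_iff.1 (Nat.dvd_one.1 h5)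
    rw [eq_top_iff, ← hgen, closure_le]
    rintro z (rfl | rfl)
    · exact (QuotientGroup.eq_one_iff (N := M) _).1 (hxy.trans hy1)
    · exact (QuotientGroup.eq_one_iff (N := M) _).1 hy1
  · intro u hu v hv
    apply key
    simp only [Set.mem_insert_iff, Set.mem_singleton_iff] at hu hv
    rcases hu with rfl | rfl | rfl <;> rcases hv with rfl | rfl | rfl <;>
      simp [x, y, pow_two] <;> ring_nf <;> first | exact hc2 | exact hc2.neg

/-! ### The case `p = 3` -/

/-- The group of order `3 ^ 5` given by `C₃ * C₃` modulo the fourth term of its lower central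
series: normal forms `x ^ a y ^ b [y,x] ^ c [y,x,x] ^ d [y,x,y] ^ e`. -/
@[ext]
structure B5 where
  a : ZMod 3
  b : ZMod 3
  c : ZMod 3
  d : ZMod 3
  e : ZMod 3

namespace B5

instance : DecidableEq B5 := fun u v =>
  decidable_of_iff (u.a = v.a ∧ u.b = v.b ∧ u.c = v.c ∧ u.d = v.d ∧ u.e = v.e) B5.ext_iff.symm

instance : Mul B5 := ⟨fun u v => ⟨u.a + v.a, u.b + v.b, u.c + v.c + v.a * u.b,
  u.d + v.d + u.c * v.a + u.b * (v.a * (1 - v.a)),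
  u.e + v.e + u.c * v.b + v.a * u.b * v.b + v.a * (u.b * (1 - u.b))⟩⟩
instance : One B5 := ⟨⟨0, 0, 0, 0, 0⟩⟩
instance : Inv B5 := ⟨fun u => ⟨-u.a, -u.b, -u.c + u.a * u.b,
  -u.d + u.c * u.a - 2 * u.a * u.a * u.b + u.a * u.b,
  -u.e + u.c * u.b + u.a * u.b + u.a * u.b * u.b⟩⟩

@[simp] lemma mul_a (u v : B5) : (u * v).a = u.a + v.a := rfl
@[simp] lemma mul_b (u v : B5) : (u * v).b = u.b + v.b := rfl
@[simp] lemma mul_c (u v : B5) : (u * v).c = u.c + v.c + v.a * u.b := rfl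
@[simp] lemma mul_d (u v : B5) :
    (u * v).d = u.d + v.d + u.c * v.a + u.b * (v.a * (1 - v.a)) := rfl
@[simp] lemma mul_e (u v : B5) : (u * v).e =
    u.e + v.e + u.c * v.b + v.a * u.b * v.b + v.a * (u.b * (1 - u.b)) := rfl
@[simp] lemma one_a : (1 : B5).a = 0 := rfl
@[simp] lemma one_b : (1 : B5).b = 0 := rfl
@[simp] lemma one_c : (1 : B5).c = 0 := rfl
@[simp] lemma one_d : (1 : B5).d = 0 := rfl
@[simp] lemma one_e : (1 : B5).e = 0 := rfl

lemma three : (3 : ZMod 3) = 0 := rfl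

instance : Group B5 where
  mul_assoc u v w := by
    ext
    · simp; ring
    · simp; ring
    · simp; ring
    · simp; linear_combination (u.b * v.a * w.a) * three
    · simp; linear_combination (-w.a * u.b * v.b) * three
  one_mul u := by ext <;> simp
  mul_one u := by ext <;> simp
  inv_mul_cancel := by
    rintro ⟨a, b, c, d, e⟩
    ext
    · change -a + a = 0; ring
    · change -b + b = 0; ring
    · change (-c + a * b) + c + a * -b = 0; ring
    · change (-d + c * a - 2 * a * a * b + a * b) + d + (-c + a * b) * a + -b * (a * (1 - a)) = 0
      ring
    · change (-e + c * b + a * b + a * b * b) + e + (-c + a * b) * b + a * -b * b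
        + a * (-b * (1 - -b)) = 0
      ring



/-- The underlying product. -/
def equivProd : B5 ≃ ZMod 3 × ZMod 3 × ZMod 3 × ZMod 3 × ZMod 3 where
  toFun u := (u.a, u.b, u.c, u.d, u.e)
  invFun t := ⟨t.1, t.2.1, t.2.2.1, t.2.2.2.1, t.2.2.2.2⟩
  left_inv _ := rfl
  right_inv _ := rfl

instance : Finite B5 := Finite.of_equiv _ equivProd.symm

lemma card_eq : Nat.card B5 = 3 ^ 5 := by
  rw [Nat.card_congr equivProd]
  simp

/-- First generator. -/
def X : B5 := ⟨1, 0, 0, 0, 0⟩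

/-- Second generator. -/
def Y : B5 := ⟨0, 1, 0, 0, 0⟩

/-- The three elements of the second generating triple. -/
def V : Fin 3 → B5
  | 0 => X⁻¹ * Y
  | 1 => X⁻¹ * Y * X * Y
  | 2 => X⁻¹ * Y * (X⁻¹ * Y * X * Y)

lemma conj_X (g : B5) :
    g * X * g⁻¹ = ⟨1, 0, g.b, g.c - g.b * g.a, g.b * (1 - g.b) - g.b * g.b⟩ := by
  rw [mul_inv_eq_iff_eq_mul]
  ext <;> simp [X] <;> ring

lemma conj_Y (g : B5) :
    g * Y * g⁻¹ = ⟨0, 1, -g.a, g.a * g.a - g.a * (1 - g.a), g.c⟩ := by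
  rw [mul_inv_eq_iff_eq_mul]
  ext <;> simp [Y] <;> ring

lemma V_pow_nine : ∀ t : Fin 3, V t ^ 9 = 1 := by decide

lemma X_ne : ∀ (t : Fin 3) (j : Fin 9) (b d : ZMod 3),
    (⟨1, 0, b, d, b * (1 - b) - b * b⟩ : B5) ≠ V t ^ (j : ℕ) := by decide +kernel

lemma Y_ne : ∀ (t : Fin 3) (j : Fin 9) (a e : ZMod 3),
    (⟨0, 1, -a, a * a - a * (1 - a), e⟩ : B5) ≠ V t ^ (j : ℕ) := by decide +kernel

lemma Z_ne : ∀ (t : Fin 3) (j : Fin 9), (X * Y) ^ 3 ≠ V t ^ (j : ℕ) := by decide +kernel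

lemma X_pow : X ^ 3 = 1 := by decide
lemma Y_pow : Y ^ 3 = 1 := by decide
lemma XY_pow : (X * Y) ^ 9 = 1 := by decide

lemma Z_central (g : B5) : g * (X * Y) ^ 3 * g⁻¹ = (X * Y) ^ 3 := by
  rw [mul_inv_eq_iff_eq_mul]
  have : (X * Y) ^ 3 = ⟨0, 0, 0, 1, 2⟩ := by decide
  rw [this]
  ext <;> simp <;> ring

lemma V_zpow (t : Fin 3) (j : ℤ) : ∃ k : Fin 9, V t ^ j = V t ^ (k : ℕ) := by
  have h9 : V t ^ (9 : ℤ) = 1 := by exact_mod_cast V_pow_nine t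
  refine ⟨⟨(j % 9).toNat, by omega⟩, ?_⟩
  have : (((j % 9).toNat : ℕ) : ℤ) = j % 9 := by omega
  rw [← zpow_natCast, this]
  conv_lhs => rw [← Int.emod_add_mul_ediv j 9, zpow_add, zpow_mul, h9, one_zpow, mul_one]

/-- If `U` has order dividing `3` and no conjugate of it is a power of `V t`, then the conjugates
of the powers of `U` meet the powers of `V t` trivially. -/
lemma dvd_of_conj (U : B5) (hU : U ^ 3 = 1) (t : Fin 3)
    (h : ∀ (g : B5) (j : Fin 9), g * U * g⁻¹ ≠ V t ^ (j : ℕ)) (g : B5) (i j : ℤ)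
    (hij : g * U ^ i * g⁻¹ = V t ^ j) : (3 : ℤ) ∣ i := by
  by_contra hi
  have hU' : U ^ (3 : ℤ) = 1 := by exact_mod_cast hU
  have h1 : (3 : ℤ) ∣ i * i - 1 := by
    rcases (by omega : i % 3 = 1 ∨ i % 3 = 2) with h | h
    · obtain ⟨m, rfl⟩ : ∃ m, i = 3 * m + 1 := ⟨i / 3, by omega⟩
      exact ⟨3 * m * m + 2 * m, by ring⟩
    · obtain ⟨m, rfl⟩ : ∃ m, i = 3 * m + 2 := ⟨i / 3, by omega⟩
      exact ⟨3 * m * m + 4 * m + 1, by ring⟩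
  obtain ⟨m, hm⟩ := h1
  have h2 : U ^ (i * i) = U := by
    rw [show i * i = 3 * m + 1 by linarith, zpow_add, zpow_mul, hU', one_zpow, one_mul, zpow_one]
  obtain ⟨k, hk⟩ := V_zpow t (j * i)
  apply h g k
  rw [← hk, zpow_mul, ← hij, conj_zpow, ← zpow_mul, h2]

lemma X_conj (t : Fin 3) (g : B5) (i j : ℤ) (hij : g * X ^ i * g⁻¹ = V t ^ j) : (3 : ℤ) ∣ i :=
  dvd_of_conj X X_pow t (fun g j => by rw [conj_X]; exact X_ne t j _ _) g i j hij

lemma Y_conj (t : Fin 3) (g : B5) (i j : ℤ) (hij : g * Y ^ i * g⁻¹ = V t ^ j) : (3 : ℤ) ∣ i :=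
  dvd_of_conj Y Y_pow t (fun g j => by rw [conj_Y]; exact Y_ne t j _ _) g i j hij

lemma Z_conj (t : Fin 3) (g : B5) (i j : ℤ) (hij : g * ((X * Y) ^ 3) ^ i * g⁻¹ = V t ^ j) :
    (3 : ℤ) ∣ i :=
  dvd_of_conj _ (by rw [← pow_mul]; exact XY_pow) t
    (fun g j => by rw [Z_central]; exact Z_ne t j) g i j hij

lemma XY_conj (t : Fin 3) (g : B5) (i j : ℤ) (hij : g * (X * Y) ^ i * g⁻¹ = V t ^ j) :
    (9 : ℤ) ∣ i := by
  have h3 : (3 : ℤ) ∣ i := by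
    apply Z_conj t g i (j * 3)
    rw [zpow_mul, ← hij, conj_zpow, ← zpow_mul, mul_comm i 3, zpow_mul]
    norm_cast
  obtain ⟨m, rfl⟩ := h3
  have : (3 : ℤ) ∣ m := by
    apply Z_conj t g m j
    rw [← hij, zpow_mul]
    norm_cast
  omega

end B5

/-- The data on a finite `3`-group that lift the Beauville structure of `B5`. -/
def Good (N : ℕ) : Prop :=
  ∃ (G : Type) (_ : Group G) (x y : G) (φ : G →* B5), Nat.card G = 3 ^ N ∧
    closure {x, y} = ⊤ ∧ x ^ 3 = 1 ∧ y ^ 3 = 1 ∧ (x * y) ^ 9 = 1 ∧ φ x = B5.X ∧ φ y = B5.Y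

lemma Good.beauville {N : ℕ} (h : Good N) :
    ∃ (G : Type) (_ : Group G), Finite G ∧ Nat.card G = 3 ^ N ∧ IsBeauvilleGroup G := by
  obtain ⟨G, _, x, y, φ, hc, hgen, hx, hy, hxy, hφx, hφy⟩ := h
  have hfin : Finite G := Nat.finite_of_card_ne_zero (by rw [hc]; positivity)
  have : Fact (Nat.Prime 3) := ⟨Nat.prime_three⟩
  refine ⟨G, inferInstance, hfin, hc, ?_⟩
  refine isBeauville_of x y (x⁻¹ * y) (x⁻¹ * y * x * y) hgen ?_ ?_
  · refine closure_eq_top_of_normal (IsPGroup.of_card hc) _ fun M hM hS => ?_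
    have h1 : x⁻¹ * y ∈ M := hS (by simp)
    have h2 : x⁻¹ * y * x * y ∈ M := hS (by simp)
    have h3 : x * y ∈ M := by
      have := M.mul_mem (M.inv_mem h1) h2
      rwa [show (x⁻¹ * y)⁻¹ * (x⁻¹ * y * x * y) = x * y by group] at this
    have h4 : x ^ 2 ∈ M := by
      have := M.mul_mem h3 (M.inv_mem h1)
      rwa [show x * y * (x⁻¹ * y)⁻¹ = x ^ 2 by rw [pow_two]; group] at this
    have h5 : x ∈ M := by
      have h6 : x = x ^ 2 * x ^ 2 := by
        rw [← pow_add, show 2 + 2 = 3 + 1 by rfl, pow_add, hx, one_mul, pow_one]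
      rw [h6]; exact M.mul_mem h4 h4
    have h6 : y ∈ M := by
      have := M.mul_mem h5 h1
      rwa [mul_inv_cancel_left] at this
    rw [eq_top_iff, ← hgen, closure_le]
    rintro z (rfl | rfl)
    · exact h5
    · exact h6
  · intro u hu v hv g i j hij
    obtain ⟨t, ht⟩ : ∃ t : Fin 3, φ v = B5.V t := by
      simp only [Set.mem_insert_iff, Set.mem_singleton_iff] at hv
      rcases hv with rfl | rfl | rfl
      · exact ⟨0, by simp [hφx, hφy, B5.V]⟩
      · exact ⟨1, by simp [hφx, hφy, B5.V]⟩
      · exact ⟨2, by simp [hφx, hφy, B5.V]⟩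
    have hij' : φ g * φ u ^ i * (φ g)⁻¹ = B5.V t ^ j := by
      rw [← ht, ← map_zpow, ← map_zpow, ← map_mul, ← map_inv, ← map_mul, hij]
    simp only [Set.mem_insert_iff, Set.mem_singleton_iff] at hu
    rcases hu with rfl | rfl | rfl
    · rw [hφx] at hij'
      obtain ⟨m, rfl⟩ := B5.X_conj t _ i j hij'
      have hx₀ : u ^ (3 : ℤ) = 1 := by exact_mod_cast hx
      rw [zpow_mul, hx₀, one_zpow]
    · rw [hφy] at hij'
      obtain ⟨m, rfl⟩ := B5.Y_conj t _ i j hij'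
      have hy₀ : u ^ (3 : ℤ) = 1 := by exact_mod_cast hy
      rw [zpow_mul, hy₀, one_zpow]
    · rw [map_mul, hφx, hφy] at hij'
      obtain ⟨m, rfl⟩ := B5.XY_conj t _ i j hij'
      have hxy₀ : (x * y) ^ (9 : ℤ) = 1 := by exact_mod_cast hxy
      rw [zpow_mul, hxy₀, one_zpow]

/-- A nontrivial normal subgroup of a finite `p`-group contains a central element of order `p`. -/
lemma exists_central {G : Type} [Group G] [Finite G] {p : ℕ} [Fact p.Prime] (hG : IsPGroup p G)
    (K : Subgroup G) [K.Normal] (hK : K ≠ ⊥) : ∃ z ∈ K, z ∈ center G ∧ orderOf z = p := by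
  have hKp : IsPGroup p K := hG.to_subgroup K
  have hnt : Nontrivial K := (Subgroup.nontrivial_iff_ne_bot K).2 hK
  obtain ⟨n, hn, hcard⟩ := hKp.nontrivial_iff_card.1 hnt
  have hG' : IsPGroup p (ConjAct G) := hG
  obtain ⟨w, hw, hw1⟩ := hG'.exists_fixed_point_of_prime_dvd_card_of_fixed_point (α := K)
    (by rw [hcard]; exact dvd_pow_self p hn.ne') (a := (1 : K)) (fun g => by simp)
  have hwc : (w : G) ∈ center G := by
    rw [mem_center_iff]
    intro g
    have h1 := congrArg Subtype.val (hw (ConjAct.toConjAct g))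
    rw [ConjAct.Subgroup.val_conj_smul, ConjAct.toConjAct_smul] at h1
    exact mul_inv_eq_iff_eq_mul.1 h1
  have hw1' : (w : G) ≠ 1 := fun h => hw1 (Subtype.ext h.symm)
  have hd := hG.dvd_orderOf hw1'
  refine ⟨(w : G) ^ (orderOf (w : G) / p), pow_mem w.2 _, pow_mem hwc _, ?_⟩
  exact orderOf_pow_orderOf_div (orderOf_pos _).ne' hd

lemma Good.descend {N : ℕ} (hN : 5 ≤ N) (h : Good (N + 1)) : Good N := by
  obtain ⟨G, _, x, y, φ, hc, hgen, hx, hy, hxy, hφx, hφy⟩ := h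
  have hfin : Finite G := Nat.finite_of_card_ne_zero (by rw [hc]; positivity)
  have : Fact (Nat.Prime 3) := ⟨Nat.prime_three⟩
  have hker : φ.ker ≠ ⊥ := by
    intro h0
    have hinj : Function.Injective φ := (MonoidHom.ker_eq_bot_iff φ).1 h0
    have := Nat.card_le_card_of_injective φ hinj
    rw [hc, B5.card_eq] at this
    have := (Nat.pow_le_pow_iff_right (by norm_num : 1 < 3)).1 this
    omega
  obtain ⟨z, hzK, hzc, hz⟩ := exists_central (IsPGroup.of_card hc) φ.ker hker
  have hle : zpowers z ≤ center G := by simpa using hzc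
  have hnorm : (zpowers z).Normal := ⟨fun w hw g => by
    rw [(mem_center_iff.1 (hle hw) g), mul_inv_cancel_right]; exact hw⟩
  have hleK : zpowers z ≤ φ.ker := by simpa using hzK
  refine ⟨G ⧸ zpowers z, inferInstance, QuotientGroup.mk x, QuotientGroup.mk y,
    QuotientGroup.lift _ φ (fun w hw => hleK hw), ?_, ?_, ?_, ?_, ?_, ?_, ?_⟩
  · have := Subgroup.card_eq_card_quotient_mul_card_subgroup (zpowers z)
    rw [hc, Nat.card_zpowers, hz, pow_succ] at this
    exact (Nat.eq_of_mul_eq_mul_right (by norm_num) this).symm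
  · have h1 := congrArg (Subgroup.map (QuotientGroup.mk' (zpowers z))) hgen
    rw [MonoidHom.map_closure, Set.image_pair,
      Subgroup.map_top_of_surjective _ (QuotientGroup.mk'_surjective _)] at h1
    exact h1
  · rw [← QuotientGroup.mk_pow, hx, QuotientGroup.mk_one]
  · rw [← QuotientGroup.mk_pow, hy, QuotientGroup.mk_one]
  · rw [← QuotientGroup.mk_mul, ← QuotientGroup.mk_pow, hxy, QuotientGroup.mk_one]
  · exact hφx
  · exact hφy

/-- The top group of the wreath product. -/
abbrev C3 := Multiplicative (ZMod 3)

/-- The affine (triangle) group piece: elements `a, b` of order `3` with `(ab)^3 = 1` and `b a⁻¹`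
of order divisible by `3 ^ k`. -/
lemma exists_affine (k : ℕ) : ∃ (A : Type) (_ : Group A) (a b : A), IsPGroup 3 A ∧ Finite A ∧
    a ^ 3 = 1 ∧ b ^ 3 = 1 ∧ (a * b) ^ 9 = 1 ∧ 3 ^ k ∣ orderOf (b * a⁻¹) := by
  have : NeZero (3 ^ k) := ⟨by positivity⟩
  let D := Multiplicative (ZMod (3 ^ k))
  have hD : Nat.card D = 3 ^ k := by
    rw [Nat.card_congr Multiplicative.toAdd, Nat.card_zmod]
  have hQ : Nat.card C3 = 3 := by
    rw [Nat.card_congr Multiplicative.toAdd, Nat.card_zmod]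
  let w : ZMod 3 → ZMod (3 ^ k) := ![1, -1, 0]
  let v : C3 → D := fun s => Multiplicative.ofAdd (w s.toAdd)
  let s : C3 := Multiplicative.ofAdd 1
  have hs : s * s * s = 1 := by decide
  have hv : ∀ r : C3, v r * v (s⁻¹ * r) * v (s⁻¹ * (s⁻¹ * r)) = 1 := by
    intro r
    apply Multiplicative.toAdd.injective
    obtain ⟨r, rfl⟩ := Multiplicative.ofAdd.surjective r
    change w r + w (-1 + r) + w (-1 + (-1 + r)) = 0
    have h : ∀ r : ZMod 3, (r = 0 ∧ -1 + r = 2 ∧ -1 + (-1 + r) = 1) ∨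
      (r = 1 ∧ -1 + r = 0 ∧ -1 + (-1 + r) = 2) ∨ (r = 2 ∧ -1 + r = 1 ∧ -1 + (-1 + r) = 0) := by
      decide
    have w0 : w 0 = 1 := rfl
    have w1 : w 1 = -1 := rfl
    have w2 : w 2 = 0 := rfl
    rcases h r with ⟨h1, h2, h3⟩ | ⟨h1, h2, h3⟩ | ⟨h1, h2, h3⟩ <;>
      rw [h3, h2, h1, w0, w1, w2] <;> ring
  let a : D ≀ᵣ C3 := ⟨1, s⟩
  let b : D ≀ᵣ C3 := ⟨v, s⟩
  refine ⟨D ≀ᵣ C3, inferInstance, a, b, ?_, inferInstance, ?_, ?_, ?_, ?_⟩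
  · refine IsPGroup.of_card (n := k * 3 + 1) ?_
    rw [RegularWreathProduct.card, hD, hQ]; ring
  · ext1
    · funext r; simp [pow_succ, a]
    · simpa [pow_succ, a] using hs
  · ext1
    · funext r
      simpa [pow_succ, b, mul_assoc] using hv r
    · simpa [pow_succ, b] using hs
  · have h3 : (a * b) ^ 3 = 1 := by
      ext1
      · funext r
        have e : ∀ r : C3, s⁻¹ * (s⁻¹ * (s⁻¹ * r)) = r := by decide
        have h := hv r
        simp only [pow_succ, pow_zero, one_mul, a, b, RegularWreathProduct.mul_left,
          Pi.mul_apply, Pi.one_apply, mul_assoc,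
          RegularWreathProduct.one_left, e]
        rw [← h]
        ac_rfl
      · simp only [pow_succ, pow_zero, one_mul, a, b, RegularWreathProduct.mul_right,
          RegularWreathProduct.one_right]
        decide
    rw [show 9 = 3 * 3 by rfl, pow_mul, h3, one_pow]
  · have h1 : b * a⁻¹ = ⟨v, 1⟩ := by
      rw [mul_inv_eq_iff_eq_mul]
      ext1
      · funext r; simp [a, b]
      · simp [a, b]
    have h2 : ∀ m : ℕ, (⟨v, 1⟩ : D ≀ᵣ C3) ^ m = ⟨v ^ m, 1⟩ := by
      intro m
      induction m with
      | zero => rw [pow_zero, pow_zero]; rfl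
      | succ m ih =>
        rw [pow_succ, ih]
        ext1
        · funext r; simp [pow_succ]
        · simp
    have h3 := pow_orderOf_eq_one (b * a⁻¹)
    set m := orderOf (b * a⁻¹)
    rw [h1, h2] at h3
    have h4 : (v 1) ^ m = 1 := congrFun (congrArg RegularWreathProduct.left h3) 1
    have h5 : m • (1 : ZMod (3 ^ k)) = 0 := congrArg Multiplicative.toAdd h4
    rw [nsmul_eq_mul, mul_one] at h5
    exact (ZMod.natCast_eq_zero_iff _ _).1 h5

lemma exists_good (k : ℕ) : ∃ N, k ≤ N ∧ Good N := by
  have : Fact (Nat.Prime 3) := ⟨Nat.prime_three⟩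
  obtain ⟨A, _, a, b, hA, hfin, ha, hb, hab, hord⟩ := exists_affine k
  let x₀ : A × B5 := (a, B5.X)
  let y₀ : A × B5 := (b, B5.Y)
  let H : Subgroup (A × B5) := closure {x₀, y₀}
  let x : H := ⟨x₀, Subgroup.subset_closure (by simp)⟩
  let y : H := ⟨y₀, Subgroup.subset_closure (by simp)⟩
  have hPA : ∃ m, Nat.card A = 3 ^ m := IsPGroup.iff_card.1 hA
  obtain ⟨m, hm⟩ := hPA
  have hP : IsPGroup 3 (A × B5) := IsPGroup.of_card (n := m + 5) (by
    rw [Nat.card_prod, hm, B5.card_eq, pow_add])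
  obtain ⟨N, hN⟩ := IsPGroup.iff_card.1 (hP.to_subgroup H)
  refine ⟨N, ?_, H, inferInstance, x, y, (MonoidHom.snd A B5).comp H.subtype, hN, ?_, ?_, ?_, ?_,
    rfl, rfl⟩
  · have h1 : 3 ^ k ∣ Nat.card H := by
      have h2 : orderOf (b * a⁻¹) ∣ orderOf (y * x⁻¹) :=
        orderOf_map_dvd ((MonoidHom.fst A B5).comp H.subtype) (y * x⁻¹)
      exact (hord.trans h2).trans (orderOf_dvd_natCard _)
    rw [hN] at h1
    exact (Nat.pow_dvd_pow_iff_le_right (by norm_num : 1 < 3)).1 h1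
  · have h1 : closure ((↑) ⁻¹' ({x₀, y₀} : Set (A × B5)) : Set H) = ⊤ :=
      Subgroup.closure_closure_coe_preimage
    rw [eq_top_iff, ← h1, closure_le]
    rintro ⟨z, hz⟩ (h | h)
    · exact Subgroup.subset_closure (Or.inl (Subtype.ext h))
    · exact Subgroup.subset_closure (Or.inr (Subtype.ext h))
  · exact Subtype.ext (Prod.ext ha B5.X_pow)
  · exact Subtype.ext (Prod.ext hb B5.Y_pow)
  · exact Subtype.ext (Prod.ext hab B5.XY_pow)

lemma good_of_le (n : ℕ) (hn : 5 ≤ n) : Good n := by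
  obtain ⟨N, hN, h⟩ := exists_good n
  obtain ⟨d, rfl⟩ := Nat.exists_eq_add_of_le hN
  clear hN
  induction d with
  | zero => exact h
  | succ d ih => exact ih (Good.descend (by omega) h)

theorem exists_beauville_p_group_of_order
    {p : ℕ} (hp : p.Prime) (hodd : Odd p) :
    ∀ n : ℕ, (if p = 3 then 5 else 2) ≤ n →
      ∃ (G : Type) (_ : Group G), Finite G ∧
        Nat.card G = p ^ n ∧ IsBeauvilleGroup G := by
  intro n hn
  by_cases h3 : p = 3
  · subst h3
    exact (good_of_le n (by simpa using hn)).beauville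
  · rw [if_neg h3] at hn
    have hp2 := hp.two_le
    have hlt : 3 < p := by
      obtain ⟨m, rfl⟩ := hodd
      omega
    obtain ⟨G, hG, h1, h2, h4⟩ := exists_large p hp hlt (n / 2) (n % 2) (by omega)
    exact ⟨G, hG, h1, by rw [h2, Nat.div_add_mod], h4⟩
end
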